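/- arXiv:1601.05622 — 2 statements merged into one kernel-verified Lean document; each statement's English description precedes it below -/
import Mathlib

section
/- Let (R,m) be a Cohen–Macaulay local ring of dimension d with 1≤d≤2 and infinite residue field, and let I, J be m-primary ideals of R. Let F = {F(r,s)}_{(r,s)∈ℤ^2} be a ℤ^2-graded (I,J)-admissible filtration of ideals in R. Then the following are equivalent: (1) e_{(d−1)e_1}(F) = 0 and e_{(d−1)e_2}(F) = 0; (2) I and J are generated by systems of parameters, P_F(r,s) = H_F(r,s) for all (r,s)∈ℕ^2, and F(r,s) = I^r J^s for all (r,s)∈ℤ^2; (3) e_α(F) = 0 for all α∈ℕ^2 with |α| ≤ d−1. -/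
/-! Common definitions for multigraded filtrations of ideals
(following Sarkar–Verma, "Postulation and reduction vectors of
multigraded filtrations of ideals"). -/

open Finset IsLocalRing

/-- The vector `e = (1,…,1) ∈ ℤˢ`. -/
def evec (s : ℕ) : Fin s → ℤ := fun _ => 1

/-- `n⁺`, the componentwise positive part of a vector. -/
def vplus {s : ℕ} (n : Fin s → ℤ) : Fin s → ℤ := fun i => max (n i) 0

/-- `I^n = I₁^{n₁} ⋯ I_s^{n_s}` with the convention `I_i^{n_i} = R` for `n_i ≤ 0`. -/
def prodPow {R : Type*} [CommRing R] {s : ℕ} (I : Fin s → Ideal R) (n : Fin s → ℤ) : Ideal R :=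
  ∏ i, I i ^ (n i).toNat

/-- An ideal is `m`-primary iff it is proper and contains a power of the maximal ideal. -/
def IsMPrimary (R : Type*) [CommRing R] [IsLocalRing R] (I : Ideal R) : Prop :=
  I ≠ ⊤ ∧ maximalIdeal R ≤ I.radical

/-- A Cohen–Macaulay local ring: some system of parameters (a regular sequence of
length equal to the Krull dimension inside the maximal ideal) exists. -/
def IsCMLocal (R : Type*) [CommRing R] [IsLocalRing R] : Prop :=
  ∃ rs : List R, (∀ x ∈ rs, x ∈ maximalIdeal R) ∧ RingTheory.Sequence.IsRegular R rs ∧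
    (rs.length : WithBot ℕ∞) = ringKrullDim R

/-- A `ℤˢ`-graded `I`-admissible filtration of ideals.  Admissibility (finiteness of the
extended Rees ring `R'(F)` as a module over `R'(I)`) is recorded through the equivalent
condition that `F(n + m) = I^n F(m)` for all `n ≥ 0`, for a suitable fixed `m ≥ 0`. -/
structure AdmissibleFiltration (R : Type*) [CommRing R] (s : ℕ) (I : Fin s → Ideal R) where
  F : (Fin s → ℤ) → Ideal R
  prodPow_le : ∀ n, prodPow I n ≤ F n
  mul_le : ∀ m n, F m * F n ≤ F (m + n)
  antitone : ∀ m n : Fin s → ℤ, m ≤ n → F n ≤ F m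
  plus_eq : ∀ n, F n = F (vplus n)
  admissible : ∃ m : Fin s → ℤ, 0 ≤ m ∧
    ∀ n : Fin s → ℤ, 0 ≤ n → F (n + m) = prodPow I n * F m

/-- The length `λ_R(M)` of a module, as an integer (the longest chain of submodules;
this is the usual length for modules of finite length). -/
noncomputable def lenI (R M : Type*) [CommRing R] [AddCommGroup M] [Module R M] : ℤ :=
  (((Order.krullDim (Submodule R M)).unbotD 0).toNat : ℤ)

/-- The Hilbert function `H_F(n) = λ(R/F(n))` of a filtration. -/
noncomputable def hilbFn {R : Type*} [CommRing R] {s : ℕ} {I : Fin s → Ideal R}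
    (F : AdmissibleFiltration R s I) (n : Fin s → ℤ) : ℤ :=
  lenI R (R ⧸ F.F n)

/-- The multigraded Hilbert polynomial with coefficient data `c = (e_α)`:
`P(n) = Σ_{|α| ≤ d} (−1)^{d−|α|} e_α ∏ᵢ binom(nᵢ+αᵢ−1, αᵢ)`. -/
noncomputable def hilbPoly (s d : ℕ) (c : (Fin s → ℕ) → ℤ) (n : Fin s → ℤ) : ℤ :=
  ∑ α ∈ Finset.univ.filter (fun α : Fin s → Fin (d+1) => (∑ i, (α i : ℕ)) ≤ d),
    (-1)^(d - ∑ i, (α i : ℕ)) * c (fun i => (α i : ℕ)) *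
      ∏ i, Ring.choose (n i + ((α i : ℕ) : ℤ) - 1) (α i : ℕ)

/-- `c : (Fin s → ℕ) → ℤ` is the family of Hilbert coefficients of `F`:
the corresponding polynomial agrees with the Hilbert function for all large `n`. -/
noncomputable def IsHilbCoeffs {R : Type*} [CommRing R] {s : ℕ} {I : Fin s → Ideal R}
    (F : AdmissibleFiltration R s I) (d : ℕ) (c : (Fin s → ℕ) → ℤ) : Prop :=
  ∃ N : ℕ, ∀ n : Fin s → ℤ, (∀ i, (N : ℤ) ≤ n i) → hilbPoly s d c n = hilbFn F n

/-- The Samuel polynomial `P_a(n) = Σ_{i=0}^{d} (−1)^i e_i binom(n+d−1−i, d−i)` with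
coefficient data `c = (e_i)`. -/
noncomputable def samuelPoly (d : ℕ) (c : ℕ → ℤ) (n : ℤ) : ℤ :=
  ∑ i ∈ Finset.range (d + 1), (-1)^i * c i * Ring.choose (n + (d : ℤ) - 1 - (i : ℤ)) (d - i)

/-- `c` is the family of Hilbert coefficients of the `m`-primary ideal `a`. -/
noncomputable def IsSamuelCoeffs {R : Type*} [CommRing R] (a : Ideal R) (d : ℕ)
    (c : ℕ → ℤ) : Prop :=
  ∃ N : ℕ, ∀ n : ℕ, N ≤ n → samuelPoly d c (n : ℤ) = lenI R (R ⧸ a ^ n)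

section Reductions

variable {R : Type*} [CommRing R] {s d : ℕ} {I : Fin s → Ideal R}

/-- The ideal `J = (y₁,…,y_d)` of a complete reduction datum, where `y_j = x_{1j}⋯x_{sj}`. -/
def crIdeal (x : Fin s → Fin d → R) : Ideal R :=
  Ideal.span (Set.range fun j => ∏ i, x i j)

/-- `A = {x_{ij} ∈ I_i}` is a complete reduction of `F`: `J·F(n) = F(n+e)` for all large `n`. -/
def IsCompleteReduction (F : AdmissibleFiltration R s I) (x : Fin s → Fin d → R) : Prop :=
  (∀ i j, x i j ∈ I i) ∧
  ∃ N : ℕ, ∀ n : Fin s → ℤ, (∀ i, (N : ℤ) ≤ n i) →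
    crIdeal x * F.F n = F.F (n + evec s)

/-- A good complete reduction: in addition `F(m) ∩ (y₁) = y₁ F(m−e)` for all large `m`. -/
def IsGoodCompleteReduction (F : AdmissibleFiltration R s I) (x : Fin s → Fin d → R) : Prop :=
  IsCompleteReduction F x ∧
  ∀ h : 0 < d, ∃ N : ℕ, ∀ m : Fin s → ℤ, (∀ i, (N : ℤ) ≤ m i) →
    F.F m ⊓ Ideal.span {∏ i, x i ⟨0, h⟩} =
      Ideal.span {∏ i, x i ⟨0, h⟩} * F.F (m - evec s)

end Reductions

/-- The first difference operator `Δ¹ f (n) = f(n+e) − f(n)`; `Δ^k` is its `k`-th iterate. -/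
def deltaOp {s : ℕ} (f : (Fin s → ℤ) → ℤ) : (Fin s → ℤ) → ℤ :=
  fun n => f (n + evec s) - f n

/-- The Ratliff–Rush closure filtration `F̆(n) = ⋃_{k ≥ 1} (F(n+ke) : F(e)^k)`. -/
def ratliffRush {R : Type*} [CommRing R] {s : ℕ} {I : Fin s → Ideal R}
    (F : AdmissibleFiltration R s I) (n : Fin s → ℤ) : Ideal R :=
  ⨆ k : ℕ, (F.F (n + ((k + 1) : ℕ) • evec s)).colon ((F.F (evec s) ^ (k + 1) : Ideal R) : Set R)

/-- Vanishing of `H¹_{R₊₊}(R(F))_n` for all `n ∈ ℕˢ`.  By Proposition 4.1 of the paper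
(see STATEMENT 9), the degree-`n` component of this local cohomology module is isomorphic
to `F̆(n)/F(n)`, so its vanishing for all `n ≥ 0` is the statement that the Ratliff–Rush
closure filtration agrees with `F` in all nonnegative degrees. -/
def H1ReesVanishes {R : Type*} [CommRing R] {s : ℕ} {I : Fin s → Ideal R}
    (F : AdmissibleFiltration R s I) : Prop :=
  ∀ n : Fin s → ℤ, 0 ≤ n → ratliffRush F n = F.F n

/-
Cut down by an element `x ∈ I i` that is superficial for `F`: the coefficients of the induced
filtration on `R ⧸ (x)` are the `e_{α + e_i}(F)`. In dimension one, superficial elements `x_i`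
satisfy `λ(R/(x_i)) = e_{e_i}(F)`, so `e_0(F) ≥ 0` compares `F(n)` with `∏ (x_i)^{n_i}` in large
degrees, and the two filtrations agree as soon as `e_0(F) = 0`. In dimension two this applies
modulo each `x_i`. The quotient filtrations are then Ratliff–Rush closed, hence so is `F`;
therefore `F(n + e_i) : x_i = F(n)` in every degree, and the dimension-one conclusions lift to
`R`. Conversely, `P_F(0) = H_F(0) = 0` gives `e_0(F) = 0`, and in dimension two the bound
`λ(R/I²) ≤ 3 λ(R/I)` for a two-generated ideal forces `e_{e_i}(F) ≤ 0`.
-/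

theorem natVec_induction {σ : Type*} [Finite σ] [DecidableEq σ] {p : (σ → ℕ) → Prop}
    (zero : p 0) (add_single : ∀ n i, p n → p (n + Pi.single i 1)) (n : σ → ℕ) : p n := by
  induction n using WellFoundedLT.induction with
  | ind n ih =>
    by_cases hn : n = 0
    · exact hn ▸ zero
    · obtain ⟨i, hi⟩ : ∃ i, n i ≠ 0 := Function.ne_iff.1 hn
      obtain ⟨m, rfl⟩ : ∃ m : σ → ℕ, n = m + Pi.single i 1 := by
        refine ⟨Function.update n i (n i - 1), ?_⟩
        ext j
        obtain rfl | hj := eq_or_ne j i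
        · simp [Nat.sub_add_cancel (Nat.one_le_iff_ne_zero.2 hi)]
        · simp [hj]
      exact add_single m i (ih m (lt_add_of_pos_right m (Pi.single_pos.2 one_pos)))

/-- The monomial `x₁ ^ n₁ ⋯ xₛ ^ nₛ`, used both for families of elements and families of ideals. -/
def multiPow {σ M : Type*} [Fintype σ] [CommMonoid M] (x : σ → M) (n : σ → ℕ) : M :=
  ∏ i, x i ^ n i

section MultiPow

variable {σ M R : Type*} [Fintype σ] [CommMonoid M] [CommRing R]

@[simp]
theorem multiPow_zero (x : σ → M) : multiPow x 0 = 1 := by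
  simp [multiPow]

theorem multiPow_add (x : σ → M) (m n : σ → ℕ) :
    multiPow x (m + n) = multiPow x m * multiPow x n := by
  simp only [multiPow, Pi.add_apply, pow_add, prod_mul_distrib]

@[simp]
theorem multiPow_single [DecidableEq σ] (x : σ → M) (i : σ) (k : ℕ) :
    multiPow x (Pi.single i k) = x i ^ k := by
  rw [multiPow, prod_eq_single i] <;> simp +contextual

theorem map_multiPow {N : Type*} [CommMonoid N] (f : M →* N) (x : σ → M) (n : σ → ℕ) :
    f (multiPow x n) = multiPow (fun i => f (x i)) n := by
  simp only [multiPow, map_prod, map_pow]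

theorem multiPow_le_of_mul_le [DecidableEq σ] {I : σ → Ideal R} {K : (σ → ℕ) → Ideal R}
    (h_zero : K 0 = ⊤) (h_single : ∀ i, I i ≤ K (Pi.single i 1))
    (h_mul : ∀ m n, K m * K n ≤ K (m + n)) (n : σ → ℕ) : multiPow I n ≤ K n := by
  induction n using natVec_induction with
  | zero => rw [h_zero]; exact le_top
  | add_single n i ih =>
    rw [multiPow_add, multiPow_single, pow_one]
    exact (Ideal.mul_mono ih (h_single i)).trans (h_mul _ _)

end MultiPow

section ReesAlgebra

open MvPolynomial

variable {σ R : Type*} [Fintype σ] [CommRing R]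

/-- The multigraded Rees algebra `⨁ₙ Iⁿ tⁿ` of a finite family of ideals `I`, as a subalgebra of
the polynomial ring. -/
def multiReesAlgebra (I : σ → Ideal R) : Subalgebra R (MvPolynomial σ R) where
  carrier := {f | ∀ n : σ →₀ ℕ, coeff n f ∈ multiPow I n}
  mul_mem' hf hg n := by
    classical
    rw [coeff_mul]
    refine Ideal.sum_mem _ fun p hp => ?_
    rw [← mem_antidiagonal.1 hp, Finsupp.coe_add, multiPow_add]
    exact Ideal.mul_mem_mul (hf _) (hg _)
  add_mem' hf hg n := Ideal.add_mem _ (hf n) (hg n)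
  algebraMap_mem' r n := by
    classical
    rw [algebraMap_eq, coeff_C]
    split_ifs with h
    · simp [← h]
    · exact Ideal.zero_mem _

variable {I : σ → Ideal R}

theorem monomial_mem_multiReesAlgebra {n : σ →₀ ℕ} {r : R} (hr : r ∈ multiPow I n) :
    monomial n r ∈ multiReesAlgebra I := by
  classical
  intro k
  rw [coeff_monomial]
  split_ifs with h
  · exact h ▸ hr
  · exact Ideal.zero_mem _

/-- The inclusion of the component `Iⁿ tⁿ` into the multigraded Rees algebra. -/
noncomputable def reesMonomial (I : σ → Ideal R) (n : σ → ℕ) :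
    ↥(multiPow I n) →ₗ[R] multiReesAlgebra I :=
  ((monomial (Finsupp.equivFunOnFinite.symm n)).comp (multiPow I n).subtype).codRestrict
    (Subalgebra.toSubmodule (multiReesAlgebra I)) fun r => monomial_mem_multiReesAlgebra r.2

@[simp]
theorem coe_reesMonomial {n : σ → ℕ} (r : ↥(multiPow I n)) :
    (reesMonomial I n r : MvPolynomial σ R) = monomial (Finsupp.equivFunOnFinite.symm n) r.1 :=
  rfl

theorem reesMonomial_mul {m n : σ → ℕ} (a : ↥(multiPow I m)) (b : ↥(multiPow I n)) :
    reesMonomial I m a * reesMonomial I n b =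
      reesMonomial I (m + n) ⟨a * b, multiPow_add I m n ▸ Ideal.mul_mem_mul a.2 b.2⟩ := by
  have h_add : Finsupp.equivFunOnFinite.symm (m + n) =
      Finsupp.equivFunOnFinite.symm m + Finsupp.equivFunOnFinite.symm n := by ext; rfl
  refine Subtype.ext ?_
  rw [MulMemClass.coe_mul, coe_reesMonomial, coe_reesMonomial, coe_reesMonomial, monomial_mul,
    h_add]

theorem multiReesAlgebra_le {A : Subalgebra R (MvPolynomial σ R)}
    (hA : ∀ i, ∀ r ∈ I i, monomial (Finsupp.single i 1) r ∈ A) : multiReesAlgebra I ≤ A := by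
  classical
  let K (n : σ → ℕ) : Ideal R :=
    (Subalgebra.toSubmodule A).comap (monomial (Finsupp.equivFunOnFinite.symm n))
  have h_mem : ∀ n, multiPow I n ≤ K n := by
    refine multiPow_le_of_mul_le ?_ ?_ ?_
    · refine (Ideal.eq_top_iff_one _).2 ?_
      change monomial (Finsupp.equivFunOnFinite.symm 0) 1 ∈ A
      have h_zero : Finsupp.equivFunOnFinite.symm (0 : σ → ℕ) = 0 := by ext; rfl
      rw [h_zero]
      exact one_mem A
    · intro i r hr
      change monomial (Finsupp.equivFunOnFinite.symm (Pi.single i 1)) r ∈ A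
      rw [Finsupp.equivFunOnFinite_symm_single]
      exact hA i r hr
    · intro m n
      refine Ideal.mul_le.2 fun a ha b hb => ?_
      change monomial (Finsupp.equivFunOnFinite.symm (m + n)) (a * b) ∈ A
      have h_add : Finsupp.equivFunOnFinite.symm (m + n) =
          Finsupp.equivFunOnFinite.symm m + Finsupp.equivFunOnFinite.symm n := by ext; rfl
      rw [h_add, ← monomial_mul]
      exact mul_mem ha hb
  intro f hf
  rw [f.as_sum]
  refine sum_mem fun n _ => ?_
  have hn := h_mem n (hf n)
  rwa [Submodule.mem_comap, Finsupp.equivFunOnFinite_symm_coe] at hn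

instance [IsNoetherianRing R] : IsNoetherianRing (multiReesAlgebra I) := by
  classical
  choose t ht using fun i => (IsNoetherian.noetherian (I i) : (I i).FG)
  refine isNoetherianRing_of_fg
    ⟨univ.biUnion fun i => (t i).image (monomial (Finsupp.single i 1)), le_antisymm ?_ ?_⟩
  · refine Algebra.adjoin_le fun f hf => ?_
    obtain ⟨i, -, r, hr, rfl⟩ : ∃ i ∈ univ, ∃ r ∈ t i, monomial (Finsupp.single i 1) r = f := by
      simpa only [mem_coe, mem_biUnion, mem_image] using hf
    refine monomial_mem_multiReesAlgebra ?_
    rw [Finsupp.single_eq_pi_single, multiPow_single, pow_one, ← ht i]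
    exact Ideal.subset_span hr
  · refine multiReesAlgebra_le fun i r hr => ?_
    rw [← ht i] at hr
    induction hr using Submodule.span_induction with
    | mem r hr =>
      exact Algebra.subset_adjoin (mem_biUnion.2 ⟨i, mem_univ i, mem_image_of_mem _ hr⟩)
    | zero => rw [map_zero]; exact zero_mem _
    | add r r' _ _ h h' => rw [map_add]; exact add_mem h h'
    | smul a r _ h => rw [map_smul]; exact Subalgebra.smul_mem _ h a

/-- The ideal `⨁ₙ L(n) tⁿ` of the multigraded Rees algebra given by a family `L` of ideals which
is stable under multiplication by the ideals `Iⁿ`. -/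
def reesIdeal (L : (σ → ℕ) → Ideal R) (hL : ∀ m n, multiPow I m * L n ≤ L (m + n)) :
    Ideal (multiReesAlgebra I) where
  carrier := {f | ∀ n : σ →₀ ℕ, coeff n f.1 ∈ L n}
  add_mem' hf hg n := Ideal.add_mem _ (hf n) (hg n)
  zero_mem' n := by simp
  smul_mem' f g hg n := by
    classical
    rw [smul_eq_mul, MulMemClass.coe_mul, coeff_mul]
    refine Ideal.sum_mem _ fun p hp => ?_
    rw [← mem_antidiagonal.1 hp, Finsupp.coe_add]
    exact hL _ _ (Ideal.mul_mem_mul (f.2 _) (hg _))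

@[simp]
theorem reesMonomial_mem_reesIdeal {L : (σ → ℕ) → Ideal R}
    {hL : ∀ m n, multiPow I m * L n ≤ L (m + n)} {n : σ → ℕ} {r : ↥(multiPow I n)} :
    reesMonomial I n r ∈ reesIdeal L hL ↔ r.1 ∈ L n := by
  classical
  refine ⟨fun h => by simpa using h (Finsupp.equivFunOnFinite.symm n), fun h k => ?_⟩
  rw [coe_reesMonomial, coeff_monomial]
  split_ifs with hk
  · exact hk ▸ h
  · exact Ideal.zero_mem _

/-- The **Artin–Rees lemma** for multigraded families. -/
theorem exists_le_multiPow_mul [IsNoetherianRing R] {L : (σ → ℕ) → Ideal R}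
    (hL : ∀ m n, multiPow I m * L n ≤ L (m + n)) (hLI : ∀ n, L n ≤ multiPow I n) :
    ∃ c, ∀ n, L (n + c) ≤ multiPow I n * L c := by
  classical
  obtain ⟨t, ht⟩ := IsNoetherian.noetherian (reesIdeal L hL)
  let c : σ →₀ ℕ := t.sup fun g => g.1.support.sup id
  refine ⟨c, fun n y hy => ?_⟩
  let m : σ →₀ ℕ := Finsupp.equivFunOnFinite.symm (n + c)
  have hb : reesMonomial I (n + c) ⟨y, hLI _ hy⟩ ∈ reesIdeal L hL :=
    reesMonomial_mem_reesIdeal.2 hy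
  rw [← ht] at hb
  obtain ⟨f, -, hf⟩ := Submodule.mem_span_finset.1 hb
  have hy_eq : y = ∑ g ∈ t, coeff m ((f g).1 * g.1) := by
    have h_coe := congrArg (coeff m ∘ Subtype.val) hf
    simpa [m, coeff_sum] using h_coe.symm
  rw [hy_eq]
  refine Ideal.sum_mem _ fun g hg => ?_
  rw [coeff_mul]
  refine Ideal.sum_mem _ fun p hp => ?_
  by_cases h_zero : coeff p.2 g.1 = 0
  · rw [h_zero, mul_zero]
    exact Ideal.zero_mem _
  have hle : p.2 ≤ c :=
    (le_sup (f := id) (mem_support_iff.2 h_zero)).trans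
      (le_sup (f := fun g => g.1.support.sup id) hg)
  obtain ⟨q, hq⟩ := exists_add_of_le hle
  have hp_one : ⇑p.1 = n + q := by
    have h_add : ⇑p.1 + p.2 = n + (p.2 + q) := by
      rw [← Finsupp.coe_add, mem_antidiagonal.1 hp, ← Finsupp.coe_add, ← hq]
      rfl
    refine add_right_cancel (b := ⇑p.2) (h_add.trans ?_)
    abel
  have hg_mem : g ∈ reesIdeal L hL := ht ▸ Submodule.subset_span hg
  have h_mem := Ideal.mul_mem_mul ((f g).2 p.1) (hg_mem p.2)
  rw [hp_one, multiPow_add, mul_assoc] at h_mem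
  rw [hq, add_comm p.2 q, Finsupp.coe_add]
  exact Ideal.mul_mono le_rfl (hL q p.2) h_mem

end ReesAlgebra

section Avoidance

variable {R M : Type*} [CommRing R] [IsLocalRing R] [Infinite (ResidueField R)]
  [AddCommGroup M] [Module R M]

theorem eq_top_of_finite_quotient (N : Submodule R M) [Finite (M ⧸ N)] : N = ⊤ := by
  refine (Submodule.eq_top_iff').2 fun z => ?_
  choose lift h_lift using residue_surjective (R := R)
  obtain ⟨α, β, hne, heq⟩ := Finite.exists_ne_map_eq_of_infinite fun α : ResidueField R =>
    (Submodule.Quotient.mk (lift α • z) : M ⧸ N)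
  have h_mem : (lift α - lift β) • z ∈ N := by
    rw [sub_smul]
    exact (Submodule.Quotient.eq N).1 heq
  have h_unit : IsUnit (lift α - lift β) := by
    rw [← residue_ne_zero_iff_isUnit, map_sub, h_lift, h_lift]
    exact sub_ne_zero.2 hne
  exact (Submodule.smul_mem_iff_of_isUnit N h_unit).1 h_mem

theorem exists_forall_mem_imp_eq_top {S : Set (Submodule R M)} (hS : S.Finite) :
    ∃ x, ∀ N ∈ S, x ∈ N → N = ⊤ := by
  by_contra! h_cover
  have h_univ : ⋃ N ∈ (hS.subset (Set.sep_subset S (· ≠ ⊤))).toFinset, (N : Set M) = Set.univ := by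
    refine Set.eq_univ_of_forall fun x => ?_
    obtain ⟨N, hN, hx, h_ne⟩ := h_cover x
    exact Set.mem_biUnion ((Set.Finite.mem_toFinset _).2 ⟨hN, h_ne⟩) hx
  obtain ⟨N, hN, h_fin⟩ := Submodule.exists_finiteIndex_of_cover h_univ
  have : Finite (M ⧸ N) := inferInstanceAs (Finite (M ⧸ N.toAddSubgroup))
  exact ((Set.Finite.mem_toFinset _).1 hN).2 (eq_top_of_finite_quotient N)

end Avoidance

section AssociatedPrimes

variable {A M : Type*} [CommRing A] [IsNoetherianRing A] [AddCommGroup M] [Module A M]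
  [Module.Finite A M]

/- The associated primes of the kernel `N` of multiplication by `x` contain `x`, so `K` lies in the
radical of the annihilator of `N`. -/
theorem exists_pow_smul_eq_zero_of_smul_eq_zero {x : A} {K : Ideal A}
    (hK : ∀ P ∈ associatedPrimes A M, x ∈ P → K ≤ P) :
    ∃ p : ℕ, ∀ m : M, x • m = 0 → ∀ k ∈ K ^ p, k • m = 0 := by
  let N : Submodule A M := LinearMap.ker (LinearMap.lsmul A M x)
  have hx : x ∈ Module.annihilator A N :=
    Module.mem_annihilator.2 fun m => Subtype.ext m.2
  have h_le : K ≤ (Module.annihilator A N).radical := by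
    rw [← Ideal.sInf_minimalPrimes]
    refine le_sInf fun P hP => hK P ?_ (hP.1.2 hx)
    exact associatedPrimes.subset_of_injective N.subtype_injective
      (Module.associatedPrimes.minimalPrimes_annihilator_subset_associatedPrimes A N hP)
  obtain ⟨p, hp⟩ :=
    Ideal.exists_pow_le_of_le_radical_of_fg h_le (IsNoetherian.noetherian K)
  refine ⟨p, fun m hm k hk => ?_⟩
  exact congrArg Subtype.val (Module.mem_annihilator.1 (hp hk) (⟨m, hm⟩ : N))

end AssociatedPrimes

section AssociatedPrimes

variable {R A : Type*} [CommRing R] [IsNoetherianRing R] [CommRing A] [IsNoetherianRing A]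

theorem mem_nonZeroDivisors_of_forall_associatedPrimes {x : R}
    (hx : ∀ P ∈ associatedPrimes R R, x ∉ P) : x ∈ nonZeroDivisors R := by
  by_contra h
  have h_mem : x ∈ ⋃ P ∈ associatedPrimes R R, (P : Set R) := by
    rw [biUnion_associatedPrimes_eq_compl_nonZeroDivisors]
    exact h
  obtain ⟨P, hP, hxP⟩ := Set.mem_iUnion₂.1 h_mem
  exact hx P hP hxP

theorem exists_pow_mul_mem_of_mul_mem {𝔏 K : Ideal A} {x : A}
    (hK : ∀ P ∈ associatedPrimes A (A ⧸ 𝔏), x ∈ P → K ≤ P) :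
    ∃ p : ℕ, ∀ b, x * b ∈ 𝔏 → ∀ k ∈ K ^ p, k * b ∈ 𝔏 := by
  obtain ⟨p, hp⟩ := exists_pow_smul_eq_zero_of_smul_eq_zero hK
  refine ⟨p, fun b hb k hk => Ideal.Quotient.eq_zero_iff_mem.1 ?_⟩
  exact hp (Ideal.Quotient.mk 𝔏 b) (Ideal.Quotient.eq_zero_iff_mem.2 hb) k hk

theorem exists_generic_mem [Algebra R A] [IsLocalRing R] [Infinite (ResidueField R)] {J : Ideal R}
    (φ : J →ₗ[R] A) (𝔏 : Ideal A) :
    ∃ x : J, (∀ P ∈ associatedPrimes R R, x.1 ∈ P → J ≤ P) ∧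
      ∀ P ∈ associatedPrimes A (A ⧸ 𝔏), φ x ∈ P → Ideal.span (Set.range φ) ≤ P := by
  let V (P : Ideal R) : Submodule R J := Submodule.comap J.subtype P
  let W (P : Ideal A) : Submodule R J := (P.restrictScalars R).comap φ
  obtain ⟨x, hx⟩ := exists_forall_mem_imp_eq_top
    (((associatedPrimes.finite R R).image V).union ((associatedPrimes.finite A (A ⧸ 𝔏)).image W))
  refine ⟨x, fun P hP hxP r hr => ?_, fun P hP hxP => ?_⟩
  · exact Submodule.eq_top_iff'.1 (hx (V P) (.inl ⟨P, hP, rfl⟩) hxP) ⟨r, hr⟩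
  · rw [Ideal.span_le]
    rintro _ ⟨a, rfl⟩
    exact Submodule.eq_top_iff'.1 (hx (W P) (.inr ⟨P, hP, rfl⟩) hxP) a

end AssociatedPrimes

section FilterRegular

variable {σ R : Type*} [Fintype σ] [CommRing R] {I : σ → Ideal R}

theorem reesMonomial_mem_span_pow (e : σ → ℕ) (p : ℕ) (w : ↥(multiPow I (p • e))) :
    reesMonomial I (p • e) w ∈ Ideal.span (Set.range (reesMonomial I e)) ^ p := by
  induction p with
  | zero => rw [pow_zero, Ideal.one_eq_top]; exact Submodule.mem_top
  | succ p ih =>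
    obtain ⟨w, hw⟩ := w
    have hw_mul : w ∈ multiPow I (p • e) * multiPow I e := by rwa [← multiPow_add, ← succ_nsmul]
    suffices ∃ hw : w ∈ multiPow I ((p + 1) • e), reesMonomial I ((p + 1) • e) ⟨w, hw⟩ ∈
        Ideal.span (Set.range (reesMonomial I e)) ^ (p + 1) from this.2
    refine Submodule.mul_induction_on hw_mul (fun a ha b hb => ?_) fun a b ha hb => ?_
    · rw [succ_nsmul, pow_succ]
      exact ⟨_, reesMonomial_mul ⟨a, ha⟩ ⟨b, hb⟩ ▸
        Ideal.mul_mem_mul (ih ⟨a, ha⟩) (Ideal.subset_span (Set.mem_range_self _))⟩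
    · exact ⟨add_mem ha.1 hb.1, (map_add (reesMonomial I _) ⟨a, ha.1⟩ ⟨b, hb.1⟩) ▸
        add_mem ha.2 hb.2⟩

variable [IsNoetherianRing R]

theorem exists_forall_mul_mem_imp_mem [IsLocalRing R] [Infinite (ResidueField R)] {e : σ → ℕ}
    (he : ∀ P ∈ associatedPrimes R R, ¬ multiPow I e ≤ P) {L : (σ → ℕ) → Ideal R}
    (hL : ∀ m n, multiPow I m * L n ≤ L (m + n)) :
    ∃ x ∈ multiPow I e, x ∈ nonZeroDivisors R ∧
      ∃ c, ∀ n ≥ c, ∀ y ∈ multiPow I n, x * y ∈ L (n + e) → y ∈ L n := by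
  obtain ⟨x, hx_reg, hx⟩ := exists_generic_mem (reesMonomial I e) (reesIdeal L hL)
  refine ⟨x, x.2, mem_nonZeroDivisors_of_forall_associatedPrimes
    fun P hP hxP => he P hP (hx_reg P hP hxP), ?_⟩
  obtain ⟨p, hp⟩ := exists_pow_mul_mem_of_mul_mem hx
  let Z (n : σ → ℕ) : Ideal R := multiPow I n ⊓ (L (n + e)).colon {x.1}
  have mem_Z {n y} : y ∈ Z n ↔ y ∈ multiPow I n ∧ x.1 * y ∈ L (n + e) := by
    rw [Submodule.mem_inf, Submodule.mem_colon_singleton, smul_eq_mul, mul_comm]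
  have hpZ (n) : multiPow I (p • e) * Z n ≤ L (p • e + n) := by
    refine Ideal.mul_le.2 fun w hw y hy => ?_
    rw [mem_Z, add_comm n e] at hy
    have h_mul : reesMonomial I e x * reesMonomial I n ⟨y, hy.1⟩ ∈ reesIdeal L hL := by
      rw [reesMonomial_mul, reesMonomial_mem_reesIdeal]
      exact hy.2
    have h_mem := hp _ h_mul _ (reesMonomial_mem_span_pow e p ⟨w, hw⟩)
    rwa [reesMonomial_mul, reesMonomial_mem_reesIdeal] at h_mem
  have hZ (m n) : multiPow I m * Z n ≤ Z (m + n) := by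
    refine Ideal.mul_le.2 fun a ha b hb => ?_
    rw [mem_Z] at hb ⊢
    rw [multiPow_add, mul_left_comm, add_assoc]
    exact ⟨Ideal.mul_mem_mul ha hb.1, hL _ _ (Ideal.mul_mem_mul ha hb.2)⟩
  obtain ⟨c, hc⟩ := exists_le_multiPow_mul hZ fun n => inf_le_left
  refine ⟨p • e + c, fun n hn y hy hxy => ?_⟩
  obtain ⟨q, rfl⟩ := exists_add_of_le hn
  rw [show p • e + c + q = q + p • e + c by abel] at hy hxy ⊢
  have hyZ := hc _ (mem_Z.2 ⟨hy, hxy⟩)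
  rw [multiPow_add, mul_assoc] at hyZ
  rw [add_assoc]
  exact hL _ _ (Ideal.mul_mono le_rfl (hpZ c) hyZ)

end FilterRegular

namespace AdmissibleFiltration

section Basic

variable {R : Type*} [CommRing R] {s : ℕ} {I : Fin s → Ideal R} (F : AdmissibleFiltration R s I)

/-- The restriction of a `ℤˢ`-graded filtration to nonnegative degrees, which determines it. -/
def natPart (n : Fin s → ℕ) : Ideal R :=
  F.F fun j => (n j : ℤ)

theorem F_eq_natPart (n : Fin s → ℤ) : F.F n = F.natPart fun j => (n j).toNat := by
  rw [F.plus_eq, natPart]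
  congr 1
  funext j
  exact (Int.toNat_eq_max (n j)).symm

theorem prodPow_natCast (I : Fin s → Ideal R) (n : Fin s → ℕ) :
    prodPow I (fun j => (n j : ℤ)) = multiPow I n := by
  simp only [prodPow, multiPow, Int.toNat_natCast]

theorem multiPow_le_natPart (n : Fin s → ℕ) : multiPow I n ≤ F.natPart n :=
  (prodPow_natCast I n).ge.trans (F.prodPow_le _)

theorem natPart_mul_le (m n : Fin s → ℕ) : F.natPart m * F.natPart n ≤ F.natPart (m + n) :=
  (F.mul_le _ _).trans_eq (congrArg F.F (funext fun _ => (Nat.cast_add _ _).symm))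

theorem natPart_antitone : Antitone F.natPart := fun _ _ h =>
  F.antitone _ _ fun j => Int.ofNat_le.2 (h j)

theorem natPart_zero : F.natPart 0 = ⊤ :=
  top_le_iff.1 (by simpa using F.multiPow_le_natPart 0)

theorem multiPow_mul_natPart_le (m n : Fin s → ℕ) :
    multiPow I m * F.natPart n ≤ F.natPart (m + n) :=
  (Ideal.mul_mono (F.multiPow_le_natPart m) le_rfl).trans (F.natPart_mul_le m n)

theorem exists_natPart_add_eq_mul :
    ∃ m, ∀ n, F.natPart (n + m) = multiPow I n * F.natPart m := by
  obtain ⟨m, hm, h⟩ := F.admissible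
  lift m to Fin s → ℕ using hm
  refine ⟨m, fun n => ?_⟩
  rw [← prodPow_natCast, natPart, natPart, ← h _ fun j => Int.natCast_nonneg (n j)]
  exact congrArg F.F (funext fun j => Nat.cast_add (n j) (m j))

theorem exists_natPart_add_le_multiPow : ∃ m, ∀ n, F.natPart (n + m) ≤ multiPow I n := by
  obtain ⟨m, hm⟩ := F.exists_natPart_add_eq_mul
  exact ⟨m, fun n => (hm n).trans_le Ideal.mul_le_left⟩

theorem le_natPart_single (i : Fin s) : I i ≤ F.natPart (Pi.single i 1) := by
  simpa using F.multiPow_le_natPart (Pi.single i 1)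

end Basic

/-- An element `x` of `I i` is superficial for the filtration `F` in direction `i` if it is regular
and `F(n + eᵢ) : x = F(n)` for all large `n`. -/
structure IsSuperficial {R : Type*} [CommRing R] {s : ℕ} {I : Fin s → Ideal R}
    (F : AdmissibleFiltration R s I) (i : Fin s) (x : R) : Prop where
  mem : x ∈ I i
  mem_nonZeroDivisors : x ∈ nonZeroDivisors R
  eventually_mem : ∀ᶠ n in Filter.atTop, ∀ y, x * y ∈ F.natPart (n + Pi.single i 1) →
    y ∈ F.natPart n

section Superficial

variable {R : Type*} [CommRing R] [IsNoetherianRing R] {s : ℕ} {I : Fin s → Ideal R}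
  (F : AdmissibleFiltration R s I)

theorem exists_mem_natPart_of_mul_mem {x : R} (hx : x ∈ nonZeroDivisors R) :
    ∃ k, ∀ n, ∀ y, x * y ∈ F.natPart (n + k) → y ∈ F.natPart n := by
  let L (n : Fin s → ℕ) : Ideal R := multiPow I n ⊓ Ideal.span {x}
  have hL : ∀ m n, multiPow I m * L n ≤ L (m + n) := fun m n => le_inf
    ((Ideal.mul_mono le_rfl inf_le_left).trans (multiPow_add I m n).ge)
    ((Ideal.mul_mono le_rfl inf_le_right).trans Ideal.mul_le_right)
  obtain ⟨c, hc⟩ := exists_le_multiPow_mul hL fun n => inf_le_left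
  obtain ⟨m, hm⟩ := F.exists_natPart_add_le_multiPow
  refine ⟨c + m, fun n y hxy => F.multiPow_le_natPart n ?_⟩
  rw [← add_assoc] at hxy
  have hxyL : x * y ∈ L (n + c) :=
    ⟨hm _ hxy, Ideal.mul_mem_right _ _ (Ideal.mem_span_singleton_self x)⟩
  obtain ⟨w, hw, hwx⟩ := Ideal.mem_mul_span_singleton.1
    (Ideal.mul_mono le_rfl inf_le_right (hc n hxyL))
  have hwy : (w - y) * x = 0 := by rw [sub_mul, hwx, mul_comm, sub_self]
  exact sub_eq_zero.1 ((mul_right_mem_nonZeroDivisors_eq_zero_iff hx).1 hwy) ▸ hw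

theorem exists_isSuperficial [IsLocalRing R] [Infinite (ResidueField R)] {i : Fin s}
    (hi : ∀ P ∈ associatedPrimes R R, ¬ I i ≤ P) : ∃ x, F.IsSuperficial i x := by
  obtain ⟨m, hm⟩ := F.exists_natPart_add_le_multiPow
  have hL : ∀ k n, multiPow I k * F.natPart (n + (m + 1)) ≤ F.natPart (k + n + (m + 1)) :=
    fun k n => (F.multiPow_mul_natPart_le _ _).trans_eq (by rw [add_assoc])
  obtain ⟨x, hxI, hx, c, hc⟩ := exists_forall_mul_mem_imp_mem (I := I) (e := Pi.single i 1)
    (by simpa using hi) hL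
  obtain ⟨k, hk⟩ := F.exists_mem_natPart_of_mul_mem hx
  have h_climb : ∀ n ≥ c + m, ∀ y ∈ F.natPart n, x * y ∈ F.natPart (n + 1 + Pi.single i 1) →
      y ∈ F.natPart (n + 1) := by
    intro n hn y hy hxy
    obtain ⟨q, rfl⟩ := exists_add_of_le hn
    rw [add_right_comm c m q] at hy hxy ⊢
    rw [add_assoc, add_assoc (c + q), ← add_assoc m 1 _, add_comm (m + 1), ← add_assoc] at hxy
    rw [add_assoc]
    exact hc _ le_self_add y (hm _ hy) hxy
  refine ⟨x, by simpa using hxI, hx, ?_⟩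
  let t := ∑ j, k j
  have hkt : k ≤ t • 1 := fun j => by
    simpa using Finset.single_le_sum (fun j _ => Nat.zero_le (k j)) (Finset.mem_univ j)
  filter_upwards [Filter.eventually_ge_atTop (c + m + t • 1)] with n hn y hxy
  obtain ⟨b, rfl⟩ := exists_add_of_le hn
  have hy : ∀ a ≤ t, y ∈ F.natPart (c + m + b + a • 1) := by
    intro a
    induction a with
    | zero =>
      refine fun _ => hk _ y (F.natPart_antitone ?_ hxy)
      rw [zero_nsmul, add_zero, add_right_comm (c + m) b]
      exact (add_le_add_left (add_le_add_right hkt _) b).trans le_self_add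
    | succ a ih =>
      intro ha
      rw [succ_nsmul, ← add_assoc]
      refine h_climb _ (le_self_add.trans le_self_add) y (ih (by lia))
        (F.natPart_antitone (add_le_add_left ?_ _) hxy)
      rw [add_assoc, ← succ_nsmul, add_right_comm (c + m)]
      exact add_le_add_left (add_le_add_right (nsmul_le_nsmul_left zero_le_one ha) _) b
  rw [add_right_comm]
  exact hy t le_rfl

end Superficial

end AdmissibleFiltration

section Colength

variable {R : Type*} [CommRing R]

/-- The length of `R ⧸ K` as an integer; it is meaningful when `R ⧸ K` has finite length. -/
noncomputable def colength (K : Ideal R) : ℤ :=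
  lenI R (R ⧸ K)

theorem colength_eq_toNat_length (K : Ideal R) :
    colength K = ((Module.length R (R ⧸ K)).toNat : ℤ) := by
  rw [colength, lenI, ← Module.coe_length, WithBot.unbotD_coe]

theorem natCast_colength {K : Ideal R} (hK : IsFiniteLength R (R ⧸ K)) :
    ((colength K).toNat : ℕ∞) = Module.length R (R ⧸ K) := by
  rw [colength_eq_toNat_length, Int.toNat_natCast,
    ENat.natCast_toNat (Module.length_ne_top_iff.2 hK)]

theorem colength_nonneg (K : Ideal R) : 0 ≤ colength K :=
  Int.natCast_nonneg _

theorem colength_top : colength (⊤ : Ideal R) = 0 := by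
  rw [colength_eq_toNat_length, Module.length_eq_zero]
  rfl

theorem isFiniteLength_quotient_mono {K L : Ideal R} (hK : IsFiniteLength R (R ⧸ K))
    (h : K ≤ L) : IsFiniteLength R (R ⧸ L) :=
  hK.of_surjective (Submodule.factor_surjective h)

theorem colength_anti {K L : Ideal R} (hK : IsFiniteLength R (R ⧸ K)) (h : K ≤ L) :
    colength L ≤ colength K := by
  rw [colength_eq_toNat_length, colength_eq_toNat_length, Int.ofNat_le]
  exact ENat.toNat_le_toNat (Module.length_le_of_surjective _ (Submodule.factor_surjective h))
    (Module.length_ne_top_iff.2 hK)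

theorem eq_of_le_of_colength_le {K L : Ideal R} (hK : IsFiniteLength R (R ⧸ K)) (h : K ≤ L)
    (h_le : colength K ≤ colength L) : K = L := by
  by_contra h_ne
  have hL := natCast_colength (isFiniteLength_quotient_mono hK h)
  have hlt : Module.length R (R ⧸ L) < Module.length R (R ⧸ K) := by
    rw [Module.length_quotient, Module.length_quotient]
    refine Order.coheight_strictAnti (h.lt_of_ne h_ne) ?_
    rw [← Module.length_quotient, ← hL]
    exact ENat.natCast_lt_top _
  rw [← hL, ← natCast_colength hK, Nat.cast_lt] at hlt
  exact absurd (Int.toNat_le_toNat h_le) hlt.not_ge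

theorem length_quotient_eq_add_colon (K : Ideal R) (x : R) :
    Module.length R (R ⧸ K) =
      Module.length R (R ⧸ K.colon {x}) + Module.length R (R ⧸ K ⊔ Ideal.span {x}) := by
  let f : (R ⧸ K.colon {x}) →ₗ[R] R ⧸ K :=
    Submodule.mapQ _ _ (LinearMap.toSpanSingleton R R x) fun _ => Submodule.mem_colon_singleton.1
  let g : (R ⧸ K) →ₗ[R] R ⧸ K ⊔ Ideal.span {x} := Submodule.factor le_sup_left
  refine Module.length_eq_add_of_exact f g ?_ (Submodule.factor_surjective _) ?_
  · rw [← LinearMap.ker_eq_bot, show f.ker = _ from Submodule.ker_mapQ .., ← Submodule.mkQ_map_self]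
    congr 1
    ext y
    exact Submodule.mem_colon_singleton.symm
  · rw [LinearMap.exact_iff, Submodule.ker_mapQ, Submodule.comap_id, Submodule.map_sup,
      Submodule.mkQ_map_self, bot_sup_eq, show f.range = _ from Submodule.range_mapQ ..,
      LinearMap.range_toSpanSingleton]

theorem colength_eq_add_colon {K : Ideal R} (hK : IsFiniteLength R (R ⧸ K)) (x : R) :
    colength K = colength (K.colon {x}) + colength (K ⊔ Ideal.span {x}) := by
  have h := length_quotient_eq_add_colon K x
  have h_ne := Module.length_ne_top_iff.2 hK
  rw [h] at h_ne
  rw [colength_eq_toNat_length, h, ENat.toNat_add (ne_top_of_le_ne_top h_ne le_self_add)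
    (ne_top_of_le_ne_top h_ne le_add_self), Nat.cast_add, ← colength_eq_toNat_length,
    ← colength_eq_toNat_length]

theorem colength_map_quotientMk (K : Ideal R) (x : R) :
    colength (K.map (Ideal.Quotient.mk (Ideal.span {x}))) = colength (K ⊔ Ideal.span {x}) := by
  have e := (DoubleQuot.quotQuotEquivQuotSupₐ R (Ideal.span {x}) K).toLinearEquiv
  rw [colength_eq_toNat_length, colength_eq_toNat_length, sup_comm, ← e.length_eq,
    Module.length_eq_of_surjective (R := R ⧸ Ideal.span {x}) (S := R) Ideal.Quotient.mk_surjective]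
  rfl

theorem colon_span_singleton_mul {x : R} (hx : x ∈ nonZeroDivisors R) (K : Ideal R) :
    (Ideal.span {x} * K).colon {x} = K := by
  ext y
  rw [Submodule.mem_colon_singleton, smul_eq_mul, mul_comm y, Ideal.mem_span_singleton_mul]
  refine ⟨?_, fun hy => ⟨y, hy, rfl⟩⟩
  rintro ⟨z, hz, h⟩
  rwa [← mul_cancel_left_mem_nonZeroDivisors hx |>.1 h]

theorem colength_span_singleton_mul {x : R} (hx : x ∈ nonZeroDivisors R) {K : Ideal R}
    (hK : IsFiniteLength R (R ⧸ Ideal.span {x} * K)) :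
    colength (Ideal.span {x} * K) = colength K + colength (Ideal.span {x}) := by
  rw [colength_eq_add_colon hK x, colon_span_singleton_mul hx, sup_eq_right.2 Ideal.mul_le_left]

theorem colength_le_card_mul_add {K L : Ideal R} (hK : IsFiniteLength R (R ⧸ K))
    (hL : IsFiniteLength R (R ⧸ L)) (S : Finset R) (hS : Ideal.span S * K ≤ L) :
    colength L ≤ S.card * colength K + colength (L ⊔ Ideal.span S) := by
  classical
  induction S using Finset.induction_on generalizing L with
  | empty => simp
  | insert x S hxS ih =>
    rw [Finset.coe_insert, Ideal.span_insert, Ideal.sup_mul, sup_le_iff] at hS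
    have hK_colon : K ≤ L.colon {x} := fun y hy => Submodule.mem_colon_singleton.2
      (hS.1 (by simpa [mul_comm] using Ideal.mul_mem_mul (Ideal.mem_span_singleton_self x) hy))
    have h_colon := colength_anti hK hK_colon
    have h_sup := ih (isFiniteLength_quotient_mono hL le_sup_left)
      (hS.2.trans (le_sup_left (b := Ideal.span {x})))
    rw [Finset.card_insert_of_notMem hxS, colength_eq_add_colon hL x, Finset.coe_insert,
      Ideal.span_insert, ← sup_assoc]
    push_cast
    linarith

section Local

variable [IsLocalRing R] [IsNoetherianRing R]

theorem isFiniteLength_quotient_of_maximalIdeal_le_radical {K : Ideal R}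
    (hK : maximalIdeal R ≤ K.radical) : IsFiniteLength R (R ⧸ K) := by
  by_cases hK_top : K = ⊤
  · subst hK_top
    exact .of_subsingleton
  have : Nontrivial (R ⧸ K) := Ideal.Quotient.nontrivial_iff.2 hK_top
  have : IsLocalRing (R ⧸ K) := .of_surjective' (Ideal.Quotient.mk K) Ideal.Quotient.mk_surjective
  obtain ⟨k, hk⟩ := Ideal.exists_pow_le_of_le_radical_of_fg hK (Ideal.fg_of_isNoetherianRing _)
  have : IsArtinianRing (R ⧸ K) := by
    refine (isArtinianRing_iff_isNilpotent_maximalIdeal _).2 ⟨k, ?_⟩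
    rw [← IsLocalRing.map_maximalIdeal_of_surjective (Ideal.Quotient.mk K)
      Ideal.Quotient.mk_surjective, ← Ideal.map_pow, Ideal.zero_eq_bot,
      Ideal.map_eq_bot_iff_le_ker, Ideal.mk_ker]
    exact hk
  rw [← Module.length_ne_top_iff,
    Module.length_eq_of_surjective (R := R ⧸ K) (S := R) Ideal.Quotient.mk_surjective]
  exact Module.length_ne_top

end Local

end Colength

section LocalHom

variable {R S : Type*} [CommRing R] [IsLocalRing R]

theorem IsMPrimary.not_le_of_mem_associatedPrimes {I : Ideal R} (hI : IsMPrimary R I)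
    (hR : maximalIdeal R ∉ associatedPrimes R R) {P : Ideal R} (hP : P ∈ associatedPrimes R R) :
    ¬ I ≤ P := fun h =>
  have : P.IsPrime := hP.isPrime
  have h_max : maximalIdeal R ≤ P := hI.2.trans (this.radical_le_iff.2 h)
  hR ((maximalIdeal.isMaximal R).eq_of_le this.ne_top h_max ▸ hP)

theorem maximalIdeal_le_radical_multiPow {σ : Type*} [Fintype σ] {I : σ → Ideal R}
    (hI : ∀ i, maximalIdeal R ≤ (I i).radical) (n : σ → ℕ) :
    maximalIdeal R ≤ (multiPow I n).radical := by
  classical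
  induction n using natVec_induction with
  | zero => rw [multiPow_zero, Ideal.one_eq_top, Ideal.radical_top]; exact le_top
  | add_single n i ih =>
    rw [multiPow_add, multiPow_single, pow_one, Ideal.radical_mul]
    exact le_inf ih (hI i)

variable [CommRing S] [IsLocalRing S]

theorem IsMPrimary.map {I : Ideal R} (hI : IsMPrimary R I) {f : R →+* S}
    (hf : Function.Surjective f) : IsMPrimary S (I.map f) := by
  rw [IsMPrimary, ← map_maximalIdeal_of_surjective f hf]
  refine ⟨((Ideal.map_mono (le_maximalIdeal hI.1)).trans_lt ?_).ne,
    (Ideal.map_mono hI.2).trans (Ideal.map_radical_le f)⟩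
  rw [map_maximalIdeal_of_surjective f hf]
  exact lt_top_iff_ne_top.2 (maximalIdeal.isMaximal S).ne_top

theorem infinite_residueField_of_surjective [Infinite (ResidueField R)] {f : R →+* S}
    (hf : Function.Surjective f) : Infinite (ResidueField S) :=
  have : IsLocalHom f := .of_surjective f hf
  .of_injective (ResidueField.map f) (ResidueField.map f).injective

end LocalHom

theorem isLocalRing_quotient_span_singleton {R : Type*} [CommRing R] [IsLocalRing R] {x : R}
    (hx : x ∈ maximalIdeal R) : IsLocalRing (R ⧸ Ideal.span {x}) :=
  have : Nontrivial (R ⧸ Ideal.span {x}) := Ideal.Quotient.nontrivial_iff.2 <| by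
    rwa [Ne, Ideal.span_singleton_eq_top]
  .of_surjective' (Ideal.Quotient.mk _) Ideal.Quotient.mk_surjective

namespace AdmissibleFiltration

variable {R S : Type*} [CommRing R] [CommRing S] {s : ℕ} {I : Fin s → Ideal R}
  (F : AdmissibleFiltration R s I)

theorem map_multiPow_ideal (f : R →+* S) (I : Fin s → Ideal R) (n : Fin s → ℕ) :
    (multiPow I n).map f = multiPow (fun i => (I i).map f) n :=
  map_multiPow (Ideal.mapHom f : Ideal R →* Ideal S) I n

theorem map_prodPow (f : R →+* S) (I : Fin s → Ideal R) (n : Fin s → ℤ) :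
    (prodPow I n).map f = prodPow (fun i => (I i).map f) n :=
  map_multiPow_ideal f I fun i => (n i).toNat

/-- The filtration of extended ideals along a ring homomorphism. -/
def map (f : R →+* S) : AdmissibleFiltration S s fun i => (I i).map f where
  F n := (F.F n).map f
  prodPow_le n := (map_prodPow f I n).ge.trans (Ideal.map_mono (F.prodPow_le n))
  mul_le m n := (Ideal.map_mul f _ _).ge.trans (Ideal.map_mono (F.mul_le m n))
  antitone m n h := Ideal.map_mono (F.antitone m n h)
  plus_eq n := congrArg (Ideal.map f) (F.plus_eq n)
  admissible := by
    obtain ⟨m, hm, h⟩ := F.admissible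
    exact ⟨m, hm, fun n hn => by rw [h n hn, Ideal.map_mul, map_prodPow]⟩

theorem natPart_map (f : R →+* S) (n : Fin s → ℕ) :
    (F.map f).natPart n = (F.natPart n).map f :=
  rfl

theorem isFiniteLength_quotient_natPart [IsLocalRing R] [IsNoetherianRing R]
    (hI : ∀ i, maximalIdeal R ≤ (I i).radical) (n : Fin s → ℕ) :
    IsFiniteLength R (R ⧸ F.natPart n) :=
  isFiniteLength_quotient_of_maximalIdeal_le_radical <|
    (maximalIdeal_le_radical_multiPow hI n).trans (Ideal.radical_mono (F.multiPow_le_natPart n))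

theorem colength_natPart_add_single [IsLocalRing R] [IsNoetherianRing R]
    (hI : ∀ i, maximalIdeal R ≤ (I i).radical) {n : Fin s → ℕ} {i : Fin s} {x : R} (hx : x ∈ I i)
    (hn : ∀ y, x * y ∈ F.natPart (n + Pi.single i 1) → y ∈ F.natPart n) :
    colength (F.natPart (n + Pi.single i 1)) = colength (F.natPart n) +
      colength ((F.map (Ideal.Quotient.mk (Ideal.span {x}))).natPart (n + Pi.single i 1)) := by
  have h_colon : (F.natPart (n + Pi.single i 1)).colon {x} = F.natPart n := by
    ext y
    rw [Submodule.mem_colon_singleton, smul_eq_mul]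
    refine ⟨fun hy => hn y (by rwa [mul_comm]), fun hy => F.natPart_mul_le _ _ ?_⟩
    exact Ideal.mul_mem_mul hy (F.le_natPart_single i hx)
  rw [natPart_map, colength_map_quotientMk,
    colength_eq_add_colon (F.isFiniteLength_quotient_natPart hI _) x, h_colon]

end AdmissibleFiltration

section HilbertPolynomial

variable {s : ℕ}

/-- The exponents `α ∈ ℕˢ` with `|α| ≤ d`. -/
def exponentsLE (s d : ℕ) : Finset (Fin s → ℕ) :=
  (Finset.univ.filter fun α : Fin s → Fin (d + 1) => ∑ i, (α i : ℕ) ≤ d).image fun α i => (α i : ℕ)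

theorem mem_exponentsLE {d : ℕ} {α : Fin s → ℕ} : α ∈ exponentsLE s d ↔ ∑ i, α i ≤ d := by
  simp only [exponentsLE, Finset.mem_image, Finset.mem_filter, Finset.mem_univ, true_and]
  refine ⟨?_, fun h => ?_⟩
  · rintro ⟨α, hα, rfl⟩
    exact hα
  · have hα (i) : α i < d + 1 :=
      Nat.lt_succ_of_le ((Finset.single_le_sum_of_canonicallyOrdered (Finset.mem_univ i)).trans h)
    exact ⟨fun i => ⟨α i, hα i⟩, h, rfl⟩

theorem filter_exponentsLE_succ (d : ℕ) (i : Fin s) :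
    (exponentsLE s (d + 1)).filter (fun α => α i ≠ 0) =
      (exponentsLE s d).image (· + Pi.single i 1) := by
  ext α
  simp only [Finset.mem_filter, Finset.mem_image, mem_exponentsLE]
  refine ⟨fun ⟨hα, hi⟩ => ⟨α - Pi.single i 1, ?_⟩, ?_⟩
  · have h_sub : α - Pi.single i 1 + Pi.single i 1 = α :=
      tsub_add_cancel_of_le <| update_le_iff.2
        ⟨Nat.one_le_iff_ne_zero.2 hi, fun _ _ => Nat.zero_le _⟩
    refine ⟨?_, h_sub⟩
    rw [← h_sub] at hα
    simpa [Finset.sum_add_distrib] using hα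
  · rintro ⟨β, hβ, rfl⟩
    simpa [Finset.sum_add_distrib] using hβ

/-- The basis polynomial `∏ᵢ binom(nᵢ+αᵢ−1, αᵢ)` of a Hilbert polynomial. -/
noncomputable def prodMultichoose (α : Fin s → ℕ) (n : Fin s → ℤ) : ℤ :=
  ∏ i, Ring.multichoose (n i) (α i)

theorem hilbPoly_eq_sum (d : ℕ) (c : (Fin s → ℕ) → ℤ) (n : Fin s → ℤ) :
    hilbPoly s d c n =
      ∑ α ∈ exponentsLE s d, (-1) ^ (d - ∑ i, α i) * c α * prodMultichoose α n := by
  rw [exponentsLE, Finset.sum_image fun α _ β _ h => funext fun i => Fin.ext (congrFun h i)]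
  have h_choose (m : ℤ) (k : ℕ) : Ring.choose (m + k - 1) k = Ring.multichoose m k := by
    rw [Ring.choose]
    congr 1
    ring
  simp only [hilbPoly, h_choose]
  rfl

theorem prodMultichoose_zero_right (α : Fin s → ℕ) :
    prodMultichoose α 0 = if α = 0 then 1 else 0 := by
  split_ifs with h
  · simp [h, prodMultichoose]
  · obtain ⟨i, hi⟩ := Function.ne_iff.1 h
    refine Finset.prod_eq_zero (Finset.mem_univ i) ?_
    obtain ⟨k, hk⟩ := Nat.exists_eq_succ_of_ne_zero hi
    rw [hk, Pi.zero_apply, Ring.multichoose_zero_succ]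

theorem prodMultichoose_add_single (α : Fin s → ℕ) (n : Fin s → ℤ) (i : Fin s) (k : ℕ) (m : ℤ) :
    prodMultichoose (α + Pi.single i k) (n + Pi.single i m) =
      Ring.multichoose (n i + m) (α i + k) * ∏ j ∈ {i}ᶜ, Ring.multichoose (n j) (α j) := by
  rw [prodMultichoose, Fintype.prod_eq_mul_prod_compl i]
  simp only [Pi.add_apply, Pi.single_eq_same]
  refine congrArg _ (Finset.prod_congr rfl fun j hj => ?_)
  rw [Pi.single_eq_of_ne (by simpa using hj), Pi.single_eq_of_ne (by simpa using hj), add_zero,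
    add_zero]

theorem prodMultichoose_add_single_right {α : Fin s → ℕ} {i : Fin s} (hα : α i = 0)
    (n : Fin s → ℤ) : prodMultichoose α (n + Pi.single i 1) = prodMultichoose α n := by
  have h (m : ℤ) := prodMultichoose_add_single α n i 0 m
  simp only [hα, Pi.single_zero, add_zero, Ring.multichoose_zero_right] at h
  rw [h 1, ← h 0, Pi.single_zero, add_zero]

theorem prodMultichoose_pascal (α : Fin s → ℕ) (i : Fin s) (n : Fin s → ℤ) :
    prodMultichoose (α + Pi.single i 1) (n + Pi.single i 1) =
      prodMultichoose (α + Pi.single i 1) n + prodMultichoose α (n + Pi.single i 1) := by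
  have h (k : ℕ) (m : ℤ) := prodMultichoose_add_single α n i k m
  have h₁₀ := h 1 0
  have h₀₁ := h 0 1
  rw [Pi.single_zero, add_zero, add_zero] at h₁₀ h₀₁
  rw [h 1 1, h₁₀, h₀₁, Ring.multichoose_succ_succ, add_mul]

theorem hilbPoly_zero_right (d : ℕ) (c : (Fin s → ℕ) → ℤ) : hilbPoly s d c 0 = (-1) ^ d * c 0 := by
  rw [hilbPoly_eq_sum, Finset.sum_eq_single 0]
  · simp [prodMultichoose_zero_right]
  · intro α _ hα
    rw [prodMultichoose_zero_right, if_neg hα, mul_zero]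
  · intro h
    exact absurd (mem_exponentsLE.2 (by simp)) h

theorem hilbPoly_zero_left (c : (Fin s → ℕ) → ℤ) (n : Fin s → ℤ) : hilbPoly s 0 c n = c 0 := by
  have h : exponentsLE s 0 = {0} := by
    ext α
    simp [mem_exponentsLE, funext_iff]
  simp [hilbPoly_eq_sum, h, prodMultichoose]

theorem hilbPoly_add_single (d : ℕ) (c : (Fin s → ℕ) → ℤ) (n : Fin s → ℤ) (i : Fin s) :
    hilbPoly s (d + 1) c (n + Pi.single i 1) = hilbPoly s (d + 1) c n +
      hilbPoly s d (fun α => c (α + Pi.single i 1)) (n + Pi.single i 1) := by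
  rw [hilbPoly_eq_sum, hilbPoly_eq_sum, hilbPoly_eq_sum, ← sub_eq_iff_eq_add',
    ← Finset.sum_sub_distrib, ← Finset.sum_filter_of_ne (p := fun α => α i ≠ 0),
    filter_exponentsLE_succ, Finset.sum_image fun _ _ _ _ => add_right_cancel]
  · refine Finset.sum_congr rfl fun α _ => ?_
    rw [prodMultichoose_pascal, ← mul_sub, add_sub_cancel_left]
    simp only [Pi.add_apply, Finset.sum_add_distrib]
    simp
  · intro α _ h_ne hα
    rw [prodMultichoose_add_single_right hα, sub_self] at h_ne
    exact h_ne rfl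

theorem natCast_add_single (n : Fin s → ℕ) (i : Fin s) :
    (fun j => ((n + Pi.single i 1 : Fin s → ℕ) j : ℤ)) = (fun j => (n j : ℤ)) + Pi.single i 1 := by
  funext j
  obtain rfl | hj := eq_or_ne j i
  · simp
  · simp [hj]

theorem sum_mul_natCast_add_single (a : Fin s → ℤ) (n : Fin s → ℕ) (i : Fin s) :
    ∑ j, a j * ((n + Pi.single i 1 : Fin s → ℕ) j : ℤ) = ∑ j, a j * n j + a i := by
  simp [mul_add, Finset.sum_add_distrib, Pi.single_apply]

theorem hilbPoly_one_left (c : (Fin s → ℕ) → ℤ) (n : Fin s → ℕ) :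
    hilbPoly s 1 c (fun j => (n j : ℤ)) = ∑ i, c (Pi.single i 1) * n i - c 0 := by
  induction n using natVec_induction with
  | zero => simpa using! hilbPoly_zero_right 1 c
  | add_single n i ih =>
    rw [natCast_add_single, hilbPoly_add_single, ih, hilbPoly_zero_left, zero_add]
    rw [sum_mul_natCast_add_single]
    ring

theorem hilbPoly_two_single_add_one (c : (Fin s → ℕ) → ℤ) (i : Fin s) (k : ℕ) :
    hilbPoly s 2 c (fun j => ((Pi.single i (k + 1) : Fin s → ℕ) j : ℤ)) =
      hilbPoly s 2 c (fun j => ((Pi.single i k : Fin s → ℕ) j : ℤ)) +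
        (c (Pi.single i 1 + Pi.single i 1) * (k + 1) - c (Pi.single i 1)) := by
  have h_one := hilbPoly_one_left (fun α => c (α + Pi.single i 1)) (Pi.single i (k + 1))
  rw [Finset.sum_eq_single_of_mem i (Finset.mem_univ i) fun j _ hj => by simp [hj],
    Pi.single_eq_same, zero_add, Nat.cast_add, Nat.cast_one] at h_one
  rw [← h_one, Pi.single_add, natCast_add_single, hilbPoly_add_single]

end HilbertPolynomial

section Eventually

variable {s : ℕ} {p : (Fin s → ℕ) → Prop}

theorem eventually_atTop_add_right (h : ∀ᶠ n in Filter.atTop, p n) (k : Fin s → ℕ) :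
    ∀ᶠ n in Filter.atTop, p (n + k) :=
  (Filter.tendsto_atTop_mono (fun _ => le_self_add) Filter.tendsto_id).eventually h

theorem eventually_atTop_of_add_right {k : Fin s → ℕ}
    (h : ∀ᶠ n in Filter.atTop, p (n + k)) : ∀ᶠ n in Filter.atTop, p n := by
  obtain ⟨N, hN⟩ := Filter.eventually_atTop.1 h
  filter_upwards [Filter.eventually_ge_atTop (N + k)] with n hn
  obtain ⟨q, rfl⟩ := exists_add_of_le hn
  rw [add_right_comm]
  exact hN _ le_self_add

end Eventually

namespace AdmissibleFiltration

section HilbertCoefficients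

variable {R : Type*} [CommRing R] {s : ℕ} {I : Fin s → Ideal R} {F : AdmissibleFiltration R s I}
  {d : ℕ} {c : (Fin s → ℕ) → ℤ}

theorem isHilbCoeffs_iff_eventually : IsHilbCoeffs F d c ↔ ∀ᶠ n : Fin s → ℕ in Filter.atTop,
    hilbPoly s d c (fun j => (n j : ℤ)) = colength (F.natPart n) := by
  refine ⟨fun ⟨N, hN⟩ => ?_, fun h => ?_⟩
  · filter_upwards [Filter.eventually_ge_atTop fun _ => N] with n hn
    exact hN _ fun i => Int.ofNat_le.2 (hn i)
  · obtain ⟨N, hN⟩ := Filter.eventually_atTop.1 h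
    refine ⟨∑ i, N i, fun n hn => ?_⟩
    lift n to Fin s → ℕ using fun i => (Int.natCast_nonneg _).trans (hn i)
    exact hN n fun i => (Finset.single_le_sum_of_canonicallyOrdered (Finset.mem_univ i)).trans
      (Int.ofNat_le.1 (hn i))

variable [IsLocalRing R] [IsNoetherianRing R]

theorem IsSuperficial.isHilbCoeffs_map (hI : ∀ i, maximalIdeal R ≤ (I i).radical) {i : Fin s}
    {x : R} (hx : F.IsSuperficial i x) (hc : IsHilbCoeffs F (d + 1) c) :
    IsHilbCoeffs (F.map (Ideal.Quotient.mk (Ideal.span {x}))) d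
      fun α => c (α + Pi.single i 1) := by
  rw [isHilbCoeffs_iff_eventually] at hc ⊢
  apply eventually_atTop_of_add_right (k := Pi.single i 1)
  filter_upwards [hc, eventually_atTop_add_right hc (Pi.single i 1), hx.eventually_mem]
    with n hn hn_add hn_mem
  rw [natCast_add_single] at hn_add ⊢
  rw [hilbPoly_add_single, hn, F.colength_natPart_add_single hI hx.mem hn_mem] at hn_add
  exact add_left_cancel hn_add

theorem eventually_natPart_eq_bot (hI : ∀ i, maximalIdeal R ≤ (I i).radical) {i : Fin s}
    (hi : I i ≠ ⊤) (hc : IsHilbCoeffs F 0 c) : ∀ᶠ n in Filter.atTop, F.natPart n = ⊥ := by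
  obtain ⟨N, hN⟩ := Filter.eventually_atTop.1 (isHilbCoeffs_iff_eventually.1 hc)
  have h_const : ∀ n ≥ N, F.natPart n = F.natPart N := fun n hn =>
    eq_of_le_of_colength_le (F.isFiniteLength_quotient_natPart hI n) (F.natPart_antitone hn) <| by
      rw [← hN n hn, ← hN N le_rfl, hilbPoly_zero_left, hilbPoly_zero_left]
  obtain ⟨m, hm⟩ := F.exists_natPart_add_le_multiPow
  have h_pow (k : ℕ) : F.natPart N ≤ I i ^ k := by
    rw [← h_const (Pi.single i k + N + m) (le_add_self.trans le_self_add), ← multiPow_single I i k]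
    refine (hm _).trans ?_
    rw [multiPow_add]
    exact Ideal.mul_le_left
  filter_upwards [Filter.eventually_ge_atTop N] with n hn
  rw [h_const n hn, eq_bot_iff, ← Ideal.iInf_pow_eq_bot_of_isLocalRing (I i) hi]
  exact le_iInf h_pow

end HilbertCoefficients

section DimensionOne

variable {R : Type*} [CommRing R] {s : ℕ} {I : Fin s → Ideal R}
  {F : AdmissibleFiltration R s I} {x : Fin s → R}

theorem multiPow_span_le_natPart (hx : ∀ i, F.IsSuperficial i (x i)) (n : Fin s → ℕ) :
    multiPow (fun i => Ideal.span {x i}) n ≤ F.natPart n :=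
  (Finset.prod_le_prod' fun i _ => Ideal.pow_right_mono
    ((Ideal.span_singleton_le_iff_mem _).2 (hx i).mem) (n i)).trans (F.multiPow_le_natPart n)

theorem natPart_eq_multiPow_span_of_add (hx : ∀ i, F.IsSuperficial i (x i)) (k : Fin s → ℕ) :
    ∀ n, F.natPart (n + k) = multiPow (fun i => Ideal.span {x i}) (n + k) →
      F.natPart n = multiPow (fun i => Ideal.span {x i}) n := by
  induction k using natVec_induction with
  | zero => exact fun n h => by rwa [add_zero] at h
  | add_single k i ih =>
    refine fun n h => ih n (le_antisymm (fun y hy => ?_) (multiPow_span_le_natPart hx _))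
    rw [← add_assoc, multiPow_add _ (n + k), multiPow_single, pow_one, mul_comm] at h
    rw [← colon_span_singleton_mul (hx i).mem_nonZeroDivisors (multiPow _ (n + k)),
      Submodule.mem_colon_singleton, ← h]
    exact F.natPart_mul_le _ _ (Ideal.mul_mem_mul hy (F.le_natPart_single i (hx i).mem))

variable [IsLocalRing R] [IsNoetherianRing R] {c : (Fin s → ℕ) → ℤ}

theorem IsSuperficial.eventually_natPart_le_span (hI : ∀ j, IsMPrimary R (I j)) {i : Fin s} {x : R}
    (hx : F.IsSuperficial i x) (hc : IsHilbCoeffs F 1 c) :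
    ∀ᶠ n in Filter.atTop, F.natPart n ≤ Ideal.span {x} ∧
      colength (Ideal.span {x}) = c (Pi.single i 1) := by
  have := isLocalRing_quotient_span_singleton (le_maximalIdeal (hI i).1 hx.mem)
  have hI_map (j) := (hI j).map (Ideal.Quotient.mk_surjective (I := Ideal.span {x}))
  have hc_map := hx.isHilbCoeffs_map (fun j => (hI j).2) hc
  filter_upwards [eventually_natPart_eq_bot (fun j => (hI_map j).2) (hI_map i).1 hc_map,
    isHilbCoeffs_iff_eventually.1 hc_map] with n hn hn_poly
  rw [natPart_map, Ideal.map_eq_bot_iff_le_ker, Ideal.mk_ker] at hn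
  refine ⟨hn, ?_⟩
  rwa [hilbPoly_zero_left, natPart_map, colength_map_quotientMk, sup_eq_right.2 hn, zero_add,
    eq_comm] at hn_poly

theorem IsSuperficial.maximalIdeal_le_radical_span (hI : ∀ j, IsMPrimary R (I j)) {i : Fin s}
    {x : R} (hx : F.IsSuperficial i x) (hc : IsHilbCoeffs F 1 c) :
    maximalIdeal R ≤ (Ideal.span {x}).radical := by
  obtain ⟨n, hn, -⟩ := (hx.eventually_natPart_le_span hI hc).exists
  exact (maximalIdeal_le_radical_multiPow (fun j => (hI j).2) n).trans
    (Ideal.radical_mono ((F.multiPow_le_natPart n).trans hn))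

theorem IsSuperficial.colength_span (hI : ∀ j, IsMPrimary R (I j)) {i : Fin s} {x : R}
    (hx : F.IsSuperficial i x) (hc : IsHilbCoeffs F 1 c) :
    colength (Ideal.span {x}) = c (Pi.single i 1) :=
  (hx.eventually_natPart_le_span hI hc).exists.choose_spec.2

theorem colength_multiPow_span (hI : ∀ j, IsMPrimary R (I j)) (hx : ∀ i, F.IsSuperficial i (x i))
    (hc : IsHilbCoeffs F 1 c) (n : Fin s → ℕ) :
    colength (multiPow (fun i => Ideal.span {x i}) n) = ∑ i, c (Pi.single i 1) * n i := by
  have h_rad (i) := (hx i).maximalIdeal_le_radical_span hI hc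
  have h_fin (n) := isFiniteLength_quotient_of_maximalIdeal_le_radical
    (maximalIdeal_le_radical_multiPow h_rad n)
  induction n using natVec_induction with
  | zero => simp [multiPow_zero, Ideal.one_eq_top, colength_top]
  | add_single n i ih =>
    have h_fin := h_fin (n + Pi.single i 1)
    rw [multiPow_add, multiPow_single, pow_one, mul_comm] at h_fin ⊢
    rw [colength_span_singleton_mul (hx i).mem_nonZeroDivisors h_fin, ih,
      (hx i).colength_span hI hc, sum_mul_natCast_add_single]

theorem coeff_zero_nonneg (hI : ∀ j, IsMPrimary R (I j)) (hx : ∀ i, F.IsSuperficial i (x i))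
    (hc : IsHilbCoeffs F 1 c) : 0 ≤ c 0 := by
  have h_rad (i) := (hx i).maximalIdeal_le_radical_span hI hc
  obtain ⟨n, hn⟩ := (isHilbCoeffs_iff_eventually.1 hc).exists
  have h_le := colength_anti (isFiniteLength_quotient_of_maximalIdeal_le_radical
    (maximalIdeal_le_radical_multiPow h_rad n)) (multiPow_span_le_natPart hx n)
  rw [hilbPoly_one_left, ← colength_multiPow_span hI hx hc] at hn
  linarith

theorem natPart_eq_multiPow_span (hI : ∀ j, IsMPrimary R (I j))
    (hx : ∀ i, F.IsSuperficial i (x i)) (hc : IsHilbCoeffs F 1 c) (hc₀ : c 0 = 0)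
    (n : Fin s → ℕ) : F.natPart n = multiPow (fun i => Ideal.span {x i}) n := by
  have h_rad (i) := (hx i).maximalIdeal_le_radical_span hI hc
  obtain ⟨N, hN⟩ := Filter.eventually_atTop.1 (isHilbCoeffs_iff_eventually.1 hc)
  refine natPart_eq_multiPow_span_of_add hx N n (Eq.symm ?_)
  refine eq_of_le_of_colength_le (isFiniteLength_quotient_of_maximalIdeal_le_radical
    (maximalIdeal_le_radical_multiPow h_rad _)) (multiPow_span_le_natPart hx _) ?_
  rw [← hN _ le_add_self, hilbPoly_one_left, colength_multiPow_span hI hx hc, hc₀, sub_zero]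

theorem eq_span_singleton (hI : ∀ j, IsMPrimary R (I j)) (hx : ∀ i, F.IsSuperficial i (x i))
    (hc : IsHilbCoeffs F 1 c) (hc₀ : c 0 = 0) (i : Fin s) : I i = Ideal.span {x i} :=
  le_antisymm ((F.le_natPart_single i).trans_eq
      (by rw [natPart_eq_multiPow_span hI hx hc hc₀, multiPow_single, pow_one]))
    ((Ideal.span_singleton_le_iff_mem _).2 (hx i).mem)

theorem natPart_eq_multiPow (hI : ∀ j, IsMPrimary R (I j)) (hx : ∀ i, F.IsSuperficial i (x i))
    (hc : IsHilbCoeffs F 1 c) (hc₀ : c 0 = 0) (n : Fin s → ℕ) : F.natPart n = multiPow I n := by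
  rw [natPart_eq_multiPow_span hI hx hc hc₀, ← funext (eq_span_singleton hI hx hc hc₀)]

theorem hilbPoly_one_eq_colength (hI : ∀ j, IsMPrimary R (I j))
    (hx : ∀ i, F.IsSuperficial i (x i)) (hc : IsHilbCoeffs F 1 c) (hc₀ : c 0 = 0) (n : Fin s → ℕ) :
    hilbPoly s 1 c (fun j => (n j : ℤ)) = colength (F.natPart n) := by
  rw [hilbPoly_one_left, hc₀, sub_zero, natPart_eq_multiPow_span hI hx hc hc₀,
    colength_multiPow_span hI hx hc]

end DimensionOne

section RatliffRush

variable {R : Type*} [CommRing R] {s : ℕ} {I : Fin s → Ideal R} {F : AdmissibleFiltration R s I}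

/-- A filtration is Ratliff–Rush closed if `F(n + k) : Iᵏ = F(n)` for all `n, k ∈ ℕˢ`; the colon
ideal is described as the largest `K` with `K Iᵏ ⊆ F(n + k)`. -/
def IsRatliffRushClosed (F : AdmissibleFiltration R s I) : Prop :=
  ∀ (n k : Fin s → ℕ) (K : Ideal R), K * multiPow I k ≤ F.natPart (n + k) → K ≤ F.natPart n

theorem IsSuperficial.mem_natPart_of_mul_mem {i : Fin s} {x : R} (hx : F.IsSuperficial i x)
    (hF : F.IsRatliffRushClosed) (n : Fin s → ℕ) (y : R)
    (hy : x * y ∈ F.natPart (n + Pi.single i 1)) : y ∈ F.natPart n := by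
  obtain ⟨N, hN⟩ := Filter.eventually_atTop.1 hx.eventually_mem
  rw [← Ideal.span_singleton_le_iff_mem]
  refine hF n N _ (Ideal.span_singleton_mul_le_iff.2 fun w hw => hN _ le_add_self _ ?_)
  rw [add_right_comm, ← mul_assoc]
  exact F.natPart_mul_le _ _ (Ideal.mul_mem_mul hy (F.multiPow_le_natPart N hw))

theorem isRatliffRushClosed_of_natPart_eq {x : Fin s → R} (hx : ∀ i, F.IsSuperficial i (x i))
    (hF : ∀ n, F.natPart n = multiPow (fun i => Ideal.span {x i}) n) : F.IsRatliffRushClosed := by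
  intro n k
  induction k using natVec_induction with
  | zero => exact fun K h => by simpa using h
  | add_single k i ih =>
    refine fun K h => ih K fun y hy => ?_
    rw [hF, ← colon_span_singleton_mul (hx i).mem_nonZeroDivisors (multiPow _ (n + k)),
      Submodule.mem_colon_singleton, smul_eq_mul, mul_comm (Ideal.span _)]
    rw [← add_assoc, hF, multiPow_add _ (n + k), multiPow_single, multiPow_add, multiPow_single,
      pow_one, pow_one, ← mul_assoc] at h
    exact h (Ideal.mul_mem_mul hy (hx i).mem)

theorem isRatliffRushClosed_of_map {x : Fin s → R} (hx : ∀ i, F.IsSuperficial i (x i))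
    (hF : ∀ i, (F.map (Ideal.Quotient.mk (Ideal.span {x i}))).IsRatliffRushClosed) :
    F.IsRatliffRushClosed := by
  intro n
  induction n using natVec_induction with
  | zero => exact fun k K _ => natPart_zero F ▸ le_top
  | add_single n i ih =>
    intro k K hK u hu
    obtain ⟨N, hN⟩ := Filter.eventually_atTop.1 (hx i).eventually_mem
    have h_map : K.map (Ideal.Quotient.mk (Ideal.span {x i})) ≤
        (F.natPart (n + Pi.single i 1)).map (Ideal.Quotient.mk (Ideal.span {x i})) := by
      refine hF i _ k _ ?_
      rw [← map_multiPow_ideal, ← Ideal.map_mul]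
      exact Ideal.map_mono hK
    obtain ⟨f, hf, z, hz, rfl⟩ := Submodule.mem_sup.1 <|
      Ideal.mem_quotient_iff_mem_sup.1 (h_map (Ideal.mem_map_of_mem _ hu))
    obtain ⟨v, rfl⟩ := Ideal.mem_span_singleton.1 hz
    refine add_mem hf ?_
    rw [add_comm n]
    refine F.natPart_mul_le _ _ (Ideal.mul_mem_mul (F.le_natPart_single i (hx i).mem) ?_)
    rw [← Ideal.span_singleton_le_iff_mem]
    refine ih (k + N) _ (Ideal.span_singleton_mul_le_iff.2 fun w hw =>
      hN _ (le_add_self.trans_eq (add_assoc _ _ _)) _ ?_)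
    have h_deg : n + (k + N) + Pi.single i 1 = n + Pi.single i 1 + (k + N) := add_right_comm _ _ _
    have hu_w : (f + x i * v) * w ∈ F.natPart (n + (k + N) + Pi.single i 1) := by
      rw [h_deg, ← add_assoc _ k]
      refine (Ideal.mul_mono hK (F.multiPow_le_natPart N)).trans (F.natPart_mul_le _ _) ?_
      rw [mul_assoc, ← multiPow_add]
      exact Ideal.mul_mem_mul hu hw
    have hf_w : f * w ∈ F.natPart (n + (k + N) + Pi.single i 1) :=
      h_deg ▸ F.natPart_mul_le _ _ (Ideal.mul_mem_mul hf (F.multiPow_le_natPart _ hw))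
    simpa only [add_mul, mul_assoc, add_sub_cancel_left] using sub_mem hu_w hf_w

end RatliffRush

end AdmissibleFiltration

section AssociatedPrimes

variable {R : Type*} [CommRing R] [IsLocalRing R]

theorem maximalIdeal_mem_associatedPrimes_iff [IsNoetherianRing R] {M : Type*} [AddCommGroup M]
    [Module R M] : maximalIdeal R ∈ associatedPrimes R M ↔
      ∃ z : M, z ≠ 0 ∧ ∀ a ∈ maximalIdeal R, a • z = 0 := by
  rw [AssociatedPrimes.mem_iff, isAssociatedPrime_iff]
  refine ⟨fun ⟨_, z, hz⟩ => ⟨z, ?_, fun a ha => ?_⟩, fun ⟨z, hz, h⟩ => ⟨inferInstance, z, ?_⟩⟩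
  · rintro rfl
    exact (maximalIdeal.isMaximal R).ne_top (hz.trans (by simp))
  · rwa [hz, Submodule.mem_colon_singleton, Submodule.mem_bot] at ha
  · refine (maximalIdeal.isMaximal R).eq_of_le ?_ fun a ha =>
      Submodule.mem_colon_singleton.2 (h a ha)
    rwa [Ne, Ideal.eq_top_iff_one, Submodule.mem_colon_singleton, one_smul, Submodule.mem_bot]

theorem maximalIdeal_notMem_associatedPrimes_of_isSMulRegular [IsNoetherianRing R] {M : Type*}
    [AddCommGroup M] [Module R M] {a : R} (ha : a ∈ maximalIdeal R) (h : IsSMulRegular M a) :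
    maximalIdeal R ∉ associatedPrimes R M := by
  rw [maximalIdeal_mem_associatedPrimes_iff]
  rintro ⟨z, hz, hz_mul⟩
  exact hz (h ((hz_mul a ha).trans (smul_zero a).symm))

/- If `az = xw` and `bz = xv`, then `bw = av`, so `w = at` by regularity of `a, b`, and `z = xt`. -/
theorem maximalIdeal_notMem_associatedPrimes_quotient_span [IsNoetherianRing R] {a b x : R}
    (ha : a ∈ maximalIdeal R) (hb : b ∈ maximalIdeal R)
    (hab : RingTheory.Sequence.IsWeaklyRegular R [a, b]) (hx : x ∈ nonZeroDivisors R) :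
    maximalIdeal R ∉ associatedPrimes R (R ⧸ Ideal.span {x}) := by
  rw [maximalIdeal_mem_associatedPrimes_iff]
  rintro ⟨z, hz, hz_mul⟩
  obtain ⟨z, rfl⟩ := Ideal.Quotient.mk_surjective z
  have h_mem {r : R} (hr : r ∈ maximalIdeal R) : x ∣ r * z :=
    Ideal.mem_span_singleton.1 (Ideal.Quotient.eq_zero_iff_mem.1 (hz_mul r hr))
  obtain ⟨w, hw⟩ := h_mem ha
  obtain ⟨v, hv⟩ := h_mem hb
  have h_comm : b * w = a * v := (mul_cancel_left_mem_nonZeroDivisors hx).1 <| by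
    linear_combination a * hv - b * hw
  obtain ⟨ha_reg, hb_reg⟩ := (RingTheory.Sequence.isWeaklyRegular_cons_iff ..).1 hab
  have hb_reg := ((RingTheory.Sequence.isWeaklyRegular_cons_iff ..).1 hb_reg).1
  obtain ⟨t, -, ht⟩ := (isSMulRegular_quotient_iff_mem_of_smul_mem ..).1 hb_reg w
    ⟨v, trivial, h_comm.symm⟩
  refine hz (Ideal.Quotient.eq_zero_iff_mem.2 (Ideal.mem_span_singleton.2 ⟨t, ha_reg ?_⟩))
  change a * z = a * (x * t)
  change a * t = w at ht
  rw [hw, ← ht]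
  ring

theorem maximalIdeal_notMem_associatedPrimes_quotient [IsNoetherianRing R] {K : Ideal R}
    [IsLocalRing (R ⧸ K)] (h : maximalIdeal R ∉ associatedPrimes R (R ⧸ K)) :
    maximalIdeal (R ⧸ K) ∉ associatedPrimes (R ⧸ K) (R ⧸ K) := by
  rw [maximalIdeal_mem_associatedPrimes_iff] at h ⊢
  rintro ⟨z, hz, hz_mul⟩
  refine h ⟨z, hz, fun a ha => hz_mul (Ideal.Quotient.mk K a) ?_⟩
  rw [← map_maximalIdeal_of_surjective _ (Ideal.Quotient.mk_surjective (I := K))]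
  exact Ideal.mem_map_of_mem _ ha

end AssociatedPrimes

namespace AdmissibleFiltration

section Superficial

variable {R : Type*} [CommRing R] [IsLocalRing R] [IsNoetherianRing R] [Infinite (ResidueField R)]
  {s : ℕ} {I : Fin s → Ideal R} (F : AdmissibleFiltration R s I)

theorem exists_forall_isSuperficial (hI : ∀ i, IsMPrimary R (I i))
    (hR : maximalIdeal R ∉ associatedPrimes R R) :
    ∃ x : Fin s → R, ∀ i, F.IsSuperficial i (x i) :=
  Classical.axiom_of_choice fun i =>
    F.exists_isSuperficial fun _ hP => (hI i).not_le_of_mem_associatedPrimes hR hP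

theorem exists_forall_isSuperficial_map (hI : ∀ i, IsMPrimary R (I i)) {x : R}
    (hx : x ∈ maximalIdeal R) (hR : maximalIdeal R ∉ associatedPrimes R (R ⧸ Ideal.span {x})) :
    ∃ y : Fin s → R ⧸ Ideal.span {x},
      ∀ i, (F.map (Ideal.Quotient.mk (Ideal.span {x}))).IsSuperficial i (y i) := by
  have := isLocalRing_quotient_span_singleton hx
  have hmk := Ideal.Quotient.mk_surjective (I := Ideal.span {x})
  have := infinite_residueField_of_surjective hmk
  exact exists_forall_isSuperficial _ (fun i => (hI i).map hmk)
    (maximalIdeal_notMem_associatedPrimes_quotient hR)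

end Superficial

section ParameterAdic

variable {R : Type*} [CommRing R] {s : ℕ} {I : Fin s → Ideal R} {F : AdmissibleFiltration R s I}
  {d : ℕ} {c : (Fin s → ℕ) → ℤ}

/-- `F` is the filtration by products of powers of the ideals `I i`, each of these is generated by
`d` elements, and the Hilbert function is given by `hilbPoly s d c` on all of `ℕˢ`. -/
structure IsParameterAdic (F : AdmissibleFiltration R s I) (d : ℕ) (c : (Fin s → ℕ) → ℤ) :
    Prop where
  exists_eq_span : ∀ i, ∃ f : Fin d → R, I i = Ideal.span (Set.range f)
  hilbPoly_eq : ∀ n, 0 ≤ n → hilbPoly s d c n = hilbFn F n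
  F_eq : ∀ n, F.F n = prodPow I n

theorem IsParameterAdic.of_natPart (h_span : ∀ i, ∃ f : Fin d → R, I i = Ideal.span (Set.range f))
    (h_poly : ∀ n : Fin s → ℕ, hilbPoly s d c (fun j => (n j : ℤ)) = colength (F.natPart n))
    (h_natPart : ∀ n, F.natPart n = multiPow I n) : F.IsParameterAdic d c where
  exists_eq_span := h_span
  hilbPoly_eq n hn := by
    lift n to Fin s → ℕ using hn
    exact h_poly n
  F_eq n := (F.F_eq_natPart n).trans (h_natPart _)

theorem IsParameterAdic.natPart_eq (h : F.IsParameterAdic d c) (n : Fin s → ℕ) :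
    F.natPart n = multiPow I n :=
  (h.F_eq _).trans (prodPow_natCast I n)

theorem IsParameterAdic.hilbPoly_natCast (h : F.IsParameterAdic d c) (n : Fin s → ℕ) :
    hilbPoly s d c (fun j => (n j : ℤ)) = colength (F.natPart n) :=
  h.hilbPoly_eq _ fun j => Int.natCast_nonneg (n j)

theorem IsParameterAdic.coeff_zero (h : F.IsParameterAdic d c) : c 0 = 0 := by
  have h_zero := h.hilbPoly_natCast 0
  rw [natPart_zero, colength_top] at h_zero
  exact (mul_eq_zero.1 ((hilbPoly_zero_right d c).symm.trans h_zero)).resolve_left (by simp)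

theorem isParameterAdic_one [IsLocalRing R] [IsNoetherianRing R] (hI : ∀ i, IsMPrimary R (I i))
    {x : Fin s → R} (hx : ∀ i, F.IsSuperficial i (x i)) (hc : IsHilbCoeffs F 1 c)
    (hc₀ : c 0 = 0) : F.IsParameterAdic 1 c :=
  .of_natPart (fun i => ⟨fun _ => x i, by
    rw [Set.range_const, eq_span_singleton hI hx hc hc₀]⟩)
    (hilbPoly_one_eq_colength hI hx hc hc₀) (natPart_eq_multiPow hI hx hc hc₀)

end ParameterAdic

section QuotientDescent

variable {R : Type*} [CommRing R]

theorem exists_eq_span_range_of_map {K : Ideal R} {x : R} (hx : x ∈ K) {d : ℕ}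
    (h : ∃ f : Fin d → R ⧸ Ideal.span {x},
      K.map (Ideal.Quotient.mk (Ideal.span {x})) = Ideal.span (Set.range f)) :
    ∃ f : Fin (d + 1) → R, K = Ideal.span (Set.range f) := by
  obtain ⟨f, hf⟩ := h
  obtain ⟨g, rfl⟩ := Ideal.Quotient.mk_surjective.comp_left f
  refine ⟨Fin.cons x g, ?_⟩
  rw [Set.range_comp, ← Ideal.map_span] at hf
  have h_comap := congrArg (Ideal.comap (Ideal.Quotient.mk (Ideal.span {x}))) hf
  rw [Ideal.comap_map_quotientMk, Ideal.comap_map_quotientMk,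
    sup_eq_right.2 ((Ideal.span_singleton_le_iff_mem _).2 hx)] at h_comap
  rw [h_comap, Fin.range_cons, Ideal.span_insert]

variable {s : ℕ} {I : Fin s → Ideal R} {F : AdmissibleFiltration R s I} {x : Fin s → R}

theorem natPart_eq_multiPow_of_map (hx : ∀ i, F.IsSuperficial i (x i))
    (hF : F.IsRatliffRushClosed)
    (h_map : ∀ i n, (F.map (Ideal.Quotient.mk (Ideal.span {x i}))).natPart n =
      multiPow (fun j => (I j).map (Ideal.Quotient.mk (Ideal.span {x i}))) n) (n : Fin s → ℕ) :
    F.natPart n = multiPow I n := by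
  refine le_antisymm ?_ (F.multiPow_le_natPart n)
  induction n using natVec_induction with
  | zero => rw [multiPow_zero, Ideal.one_eq_top]; exact le_top
  | add_single n i ih =>
    intro u hu
    have hu_map := Ideal.mem_map_of_mem (Ideal.Quotient.mk (Ideal.span {x i})) hu
    rw [← natPart_map, h_map, ← map_multiPow_ideal, Ideal.mem_quotient_iff_mem_sup] at hu_map
    obtain ⟨a, ha, z, hz, rfl⟩ := Submodule.mem_sup.1 hu_map
    obtain ⟨v, rfl⟩ := Ideal.mem_span_singleton.1 hz
    have hv : v ∈ F.natPart n := (hx i).mem_natPart_of_mul_mem hF n v <|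
      (add_mem_cancel_left (F.multiPow_le_natPart _ ha)).1 hu
    refine add_mem ha ?_
    rw [multiPow_add, multiPow_single, pow_one, mul_comm (x i)]
    exact Ideal.mul_mem_mul (ih hv) (hx i).mem

variable [IsLocalRing R] [IsNoetherianRing R] {c : (Fin s → ℕ) → ℤ}

theorem hilbPoly_eq_colength_of_map (hI : ∀ i, maximalIdeal R ≤ (I i).radical) {d : ℕ}
    (hx : ∀ i, F.IsSuperficial i (x i)) (hF : F.IsRatliffRushClosed)
    (hc : IsHilbCoeffs F (d + 1) c)
    (h_map : ∀ i (n : Fin s → ℕ), hilbPoly s d (fun α => c (α + Pi.single i 1))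
      (fun j => (n j : ℤ)) = colength ((F.map (Ideal.Quotient.mk (Ideal.span {x i}))).natPart n))
    (n : Fin s → ℕ) :
    hilbPoly s (d + 1) c (fun j => (n j : ℤ)) = colength (F.natPart n) := by
  obtain ⟨N, hN⟩ := Filter.eventually_atTop.1 (isHilbCoeffs_iff_eventually.1 hc)
  have hN := hN (n + N) le_add_self
  generalize N = k at hN
  induction k using natVec_induction with
  | zero => rwa [add_zero] at hN
  | add_single k i ih =>
    refine ih ?_
    rw [← add_assoc, F.colength_natPart_add_single hI (hx i).mem
      ((hx i).mem_natPart_of_mul_mem hF _), ← h_map, natCast_add_single, hilbPoly_add_single] at hN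
    exact add_right_cancel hN

/- With `a = c (2 eᵢ)` and `e = c (eᵢ)`, the lengths of `R/I` and `R/I²` are `a - e` and `3a - 2e`,
while `λ(R/I²) ≤ 3 λ(R/I)` because `I` has two generators. -/
theorem IsParameterAdic.coeff_single_nonpos (hI : ∀ i, maximalIdeal R ≤ (I i).radical)
    (h : F.IsParameterAdic 2 c) (i : Fin s) : c (Pi.single i 1) ≤ 0 := by
  classical
  obtain ⟨f, hf⟩ := h.exists_eq_span i
  have h_fin (k : ℕ) : IsFiniteLength R (R ⧸ I i ^ k) := by
    rw [← multiPow_single, ← h.natPart_eq]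
    exact F.isFiniteLength_quotient_natPart hI _
  have h_colength (k : ℕ) : hilbPoly s 2 c (fun j => ((Pi.single i k : Fin s → ℕ) j : ℤ)) =
      colength (I i ^ k) := by
    rw [h.hilbPoly_natCast, h.natPart_eq, multiPow_single]
  have h_zero := h_colength 0
  have h_one := hilbPoly_two_single_add_one c i 0
  have h_two := hilbPoly_two_single_add_one c i 1
  rw [pow_zero, Ideal.one_eq_top, colength_top] at h_zero
  rw [h_zero, h_colength, zero_add, pow_one] at h_one
  rw [h_colength, h_colength, one_add_one_eq_two, pow_one] at h_two
  have h_span : Ideal.span (Finset.univ.image f) = I i := by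
    rw [Finset.coe_image, Finset.coe_univ, Set.image_univ, hf]
  have h_le := colength_le_card_mul_add (pow_one (I i) ▸ h_fin 1) (h_fin 2) (Finset.univ.image f)
    (by rw [h_span, sq])
  rw [h_span, sup_eq_right.2 (Ideal.pow_le_self two_ne_zero)] at h_le
  have h_card : ((Finset.univ.image f).card : ℤ) ≤ 2 := by
    exact_mod_cast Finset.card_image_le.trans_eq (Finset.card_fin 2)
  have h_mul := mul_le_mul_of_nonneg_right h_card (colength_nonneg (I i))
  push_cast at h_one h_two
  linarith

end QuotientDescent

section DimensionTwo

variable {R : Type*} [CommRing R] [IsLocalRing R] [IsNoetherianRing R] [Infinite (ResidueField R)]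
  {s : ℕ} {I : Fin s → Ideal R} {F : AdmissibleFiltration R s I} {c : (Fin s → ℕ) → ℤ}

theorem IsSuperficial.coeff_single_nonneg (hI : ∀ i, IsMPrimary R (I i)) {i : Fin s} {x : R}
    (hx : F.IsSuperficial i x) (hR : maximalIdeal R ∉ associatedPrimes R (R ⧸ Ideal.span {x}))
    (hc : IsHilbCoeffs F 2 c) : 0 ≤ c (Pi.single i 1) := by
  have hx_mem := le_maximalIdeal (hI i).1 hx.mem
  have := isLocalRing_quotient_span_singleton hx_mem
  obtain ⟨y, hy⟩ := F.exists_forall_isSuperficial_map hI hx_mem hR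
  simpa only [zero_add] using
    coeff_zero_nonneg (fun j => (hI j).map Ideal.Quotient.mk_surjective) hy
      (hx.isHilbCoeffs_map (fun j => (hI j).2) hc)

theorem IsSuperficial.isParameterAdic_map (hI : ∀ i, IsMPrimary R (I i)) {i : Fin s} {x : R}
    (hx : F.IsSuperficial i x) (hR : maximalIdeal R ∉ associatedPrimes R (R ⧸ Ideal.span {x}))
    (hc : IsHilbCoeffs F 2 c) (hci : c (Pi.single i 1) = 0) :
    (F.map (Ideal.Quotient.mk (Ideal.span {x}))).IsRatliffRushClosed ∧
      (F.map (Ideal.Quotient.mk (Ideal.span {x}))).IsParameterAdic 1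
        fun α => c (α + Pi.single i 1) := by
  have hx_mem := le_maximalIdeal (hI i).1 hx.mem
  have := isLocalRing_quotient_span_singleton hx_mem
  obtain ⟨y, hy⟩ := F.exists_forall_isSuperficial_map hI hx_mem hR
  have hI_map (j) := (hI j).map (Ideal.Quotient.mk_surjective (I := Ideal.span {x}))
  have hc_map := hx.isHilbCoeffs_map (fun j => (hI j).2) hc
  have hc₀ : c (0 + Pi.single i 1) = 0 := by rwa [zero_add]
  exact ⟨isRatliffRushClosed_of_natPart_eq hy (natPart_eq_multiPow_span hI_map hy hc_map hc₀),
    isParameterAdic_one hI_map hy hc_map hc₀⟩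

theorem isParameterAdic_two (hI : ∀ i, IsMPrimary R (I i)) {x : Fin s → R}
    (hx : ∀ i, F.IsSuperficial i (x i))
    (hR : ∀ i, maximalIdeal R ∉ associatedPrimes R (R ⧸ Ideal.span {x i}))
    (hc : IsHilbCoeffs F 2 c) (hc₁ : ∀ i, c (Pi.single i 1) = 0) : F.IsParameterAdic 2 c := by
  have h_map (i) := (hx i).isParameterAdic_map hI (hR i) hc (hc₁ i)
  have hF := isRatliffRushClosed_of_map hx fun i => (h_map i).1
  exact .of_natPart
    (fun i => exists_eq_span_range_of_map (hx i).mem ((h_map i).2.exists_eq_span i))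
    (hilbPoly_eq_colength_of_map (fun i => (hI i).2) hx hF hc fun i => (h_map i).2.hilbPoly_natCast)
    (natPart_eq_multiPow_of_map hx hF fun i => (h_map i).2.natPart_eq)

end DimensionTwo

end AdmissibleFiltration

section CohenMacaulay

variable {R : Type*} [CommRing R] [IsLocalRing R] [IsNoetherianRing R]

theorem IsCMLocal.maximalIdeal_notMem_associatedPrimes (hR : IsCMLocal R)
    (hdim : 0 < ringKrullDim R) : maximalIdeal R ∉ associatedPrimes R R := by
  obtain ⟨rs, hrs, h_reg, h_len⟩ := hR
  obtain ⟨a, rs, rfl⟩ := List.exists_cons_of_length_pos (Nat.cast_pos.1 (h_len ▸ hdim))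
  exact maximalIdeal_notMem_associatedPrimes_of_isSMulRegular (hrs a List.mem_cons_self)
    ((RingTheory.Sequence.isWeaklyRegular_cons_iff ..).1 h_reg.toIsWeaklyRegular).1

theorem IsCMLocal.maximalIdeal_notMem_associatedPrimes_quotient (hR : IsCMLocal R)
    (hdim : ringKrullDim R = 2) {x : R} (hx : x ∈ nonZeroDivisors R) :
    maximalIdeal R ∉ associatedPrimes R (R ⧸ Ideal.span {x}) := by
  obtain ⟨rs, hrs, h_reg, h_len⟩ := hR
  obtain ⟨a, b, rfl⟩ := List.length_eq_two.1 (by exact_mod_cast h_len.trans hdim)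
  exact maximalIdeal_notMem_associatedPrimes_quotient_span (hrs a (by simp)) (hrs b (by simp))
    h_reg.toIsWeaklyRegular hx

end CohenMacaulay

theorem eq_zero_or_eq_single_of_sum_le_one {σ : Type*} [Fintype σ] [DecidableEq σ] {α : σ → ℕ}
    (h : ∑ i, α i ≤ 1) : α = 0 ∨ ∃ i, α = Pi.single i 1 := by
  refine or_iff_not_imp_left.2 fun hα => ?_
  obtain ⟨i, hi⟩ := Function.ne_iff.1 hα
  refine ⟨i, funext fun j => ?_⟩
  have h_sum := (Finset.add_sum_erase Finset.univ α (Finset.mem_univ i)).trans_le h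
  rw [Pi.zero_apply] at hi
  obtain rfl | hj := eq_or_ne j i
  · rw [Pi.single_eq_same]
    lia
  · have h_le := Finset.single_le_sum_of_canonicallyOrdered (f := α)
      (Finset.mem_erase.2 ⟨hj, Finset.mem_univ j⟩)
    rw [Pi.single_eq_of_ne hj]
    lia

namespace AdmissibleFiltration

theorem isParameterAdic_pair_iff {R : Type*} [CommRing R] {I J : Ideal R}
    {F : AdmissibleFiltration R 2 ![I, J]} {d : ℕ} {c : (Fin 2 → ℕ) → ℤ} :
    F.IsParameterAdic d c ↔ (∃ f : Fin d → R, I = Ideal.span (Set.range f)) ∧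
      (∃ g : Fin d → R, J = Ideal.span (Set.range g)) ∧
      (∀ n : Fin 2 → ℤ, 0 ≤ n → hilbPoly 2 d c n = hilbFn F n) ∧
      ∀ n : Fin 2 → ℤ, F.F n = I ^ (n 0).toNat * J ^ (n 1).toNat := by
  have h_prodPow (n : Fin 2 → ℤ) : prodPow ![I, J] n = I ^ (n 0).toNat * J ^ (n 1).toNat :=
    Fin.prod_univ_two _
  simp only [← h_prodPow]
  exact ⟨fun h => ⟨h.exists_eq_span 0, h.exists_eq_span 1, h.hilbPoly_eq, h.F_eq⟩,
    fun ⟨hI, hJ, h_poly, hF⟩ => ⟨Fin.forall_fin_two.2 ⟨hI, hJ⟩, h_poly, hF⟩⟩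

variable {R : Type*} [CommRing R] [IsLocalRing R] [IsNoetherianRing R] [Infinite (ResidueField R)]
  {s : ℕ} {I : Fin s → Ideal R} {F : AdmissibleFiltration R s I} {c : (Fin s → ℕ) → ℤ}

theorem isParameterAdic_one_iff (hR : IsCMLocal R) (hdim : ringKrullDim R = 1)
    (hI : ∀ i, IsMPrimary R (I i)) (hc : IsHilbCoeffs F 1 c) :
    F.IsParameterAdic 1 c ↔ c 0 = 0 := by
  obtain ⟨x, hx⟩ := F.exists_forall_isSuperficial hI
    (hR.maximalIdeal_notMem_associatedPrimes (hdim ▸ zero_lt_one))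
  exact ⟨IsParameterAdic.coeff_zero, isParameterAdic_one hI hx hc⟩

theorem isParameterAdic_two_iff (hR : IsCMLocal R) (hdim : ringKrullDim R = 2)
    (hI : ∀ i, IsMPrimary R (I i)) (hc : IsHilbCoeffs F 2 c) :
    F.IsParameterAdic 2 c ↔ ∀ i, c (Pi.single i 1) = 0 := by
  obtain ⟨x, hx⟩ := F.exists_forall_isSuperficial hI
    (hR.maximalIdeal_notMem_associatedPrimes (hdim ▸ zero_lt_two))
  have h_quot (i) :=
    hR.maximalIdeal_notMem_associatedPrimes_quotient hdim (hx i).mem_nonZeroDivisors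
  exact ⟨fun h i => (h.coeff_single_nonpos (fun j => (hI j).2) i).antisymm
    ((hx i).coeff_single_nonneg hI (h_quot i) hc), isParameterAdic_two hI hx h_quot hc⟩

end AdmissibleFiltration

theorem coeff_vanishing_tfae_dim_le_two_general {R : Type*} [CommRing R] [IsLocalRing R]
    [IsNoetherianRing R] [Infinite (ResidueField R)] {d : ℕ} (hd1 : 1 ≤ d) (hd2 : d ≤ 2)
    (hdim : ringKrullDim R = d) (hCM : IsCMLocal R) {s : ℕ} [NeZero s] {I : Fin s → Ideal R}
    (hI : ∀ i, IsMPrimary R (I i)) {F : AdmissibleFiltration R s I} {c : (Fin s → ℕ) → ℤ}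
    (hc : IsHilbCoeffs F d c) :
    List.TFAE [∀ i, c (Pi.single i (d - 1)) = 0, F.IsParameterAdic d c,
      ∀ α, ∑ i, α i ≤ d - 1 → c α = 0] := by
  have h_cases : d = 1 ∨ d = 2 := by lia
  tfae_have 1 → 2 := fun h => by
    obtain rfl | rfl := h_cases
    · exact (AdmissibleFiltration.isParameterAdic_one_iff hCM hdim hI hc).2 (by simpa using h 0)
    · exact (AdmissibleFiltration.isParameterAdic_two_iff hCM hdim hI hc).2 h
  tfae_have 2 → 3 := fun h α hα => by
    obtain rfl | ⟨i, rfl⟩ := eq_zero_or_eq_single_of_sum_le_one (hα.trans (by lia))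
    · exact h.coeff_zero
    · obtain rfl | rfl := h_cases
      · simp at hα
      · exact (AdmissibleFiltration.isParameterAdic_two_iff hCM hdim hI hc).1 h i
  tfae_have 3 → 1 := fun h i => h _ (by simp)
  tfae_finish

/-- STATEMENT 14: Let `(R,m)` be Cohen–Macaulay local of dimension `1 ≤ d ≤ 2` with
infinite residue field, `I, J` `m`-primary ideals, `F` a `ℤ²`-graded `(I,J)`-admissible
filtration with Hilbert coefficients `c`.  The following are equivalent:
(1) `e_{(d−1)e_i}(F) = 0` for `i = 1,2`;
(2) `I` and `J` are generated by systems of parameters (i.e. by `d` elements),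
    `P_F(r,s) = H_F(r,s)` for all `(r,s) ∈ ℕ²`, and `F(r,s) = I^r J^s` for all
    `(r,s) ∈ ℤ²`;
(3) `e_α(F) = 0` for all `|α| ≤ d−1`. -/
theorem coeff_vanishing_tfae_dim_le_two
    (R : Type*) [CommRing R] [IsLocalRing R] [IsNoetherianRing R]
    [Infinite (IsLocalRing.ResidueField R)]
    (d : ℕ) (hd1 : 1 ≤ d) (hd2 : d ≤ 2)
    (hdim : ringKrullDim R = d) (hCM : IsCMLocal R)
    (I J : Ideal R) (hI : IsMPrimary R I) (hJ : IsMPrimary R J)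
    (F : AdmissibleFiltration R 2 ![I, J])
    (c : (Fin 2 → ℕ) → ℤ) (hc : IsHilbCoeffs F d c) :
    ((∀ i : Fin 2, c (fun j => if j = i then d - 1 else 0) = 0)
      ↔ ((∃ f : Fin d → R, I = Ideal.span (Set.range f))
          ∧ (∃ g : Fin d → R, J = Ideal.span (Set.range g))
          ∧ (∀ n : Fin 2 → ℤ, 0 ≤ n → hilbPoly 2 d c n = hilbFn F n)
          ∧ (∀ n : Fin 2 → ℤ, F.F n = I ^ (n 0).toNat * J ^ (n 1).toNat)))
    ∧ (((∃ f : Fin d → R, I = Ideal.span (Set.range f))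
          ∧ (∃ g : Fin d → R, J = Ideal.span (Set.range g))
          ∧ (∀ n : Fin 2 → ℤ, 0 ≤ n → hilbPoly 2 d c n = hilbFn F n)
          ∧ (∀ n : Fin 2 → ℤ, F.F n = I ^ (n 0).toNat * J ^ (n 1).toNat))
      ↔ (∀ α : Fin 2 → ℕ, α 0 + α 1 ≤ d - 1 → c α = 0)) := by
  have hIJ : ∀ i, IsMPrimary R (![I, J] i) := Fin.forall_fin_two.2 ⟨hI, hJ⟩
  have h_single (i : Fin 2) : Pi.single i (d - 1) = fun j => if j = i then d - 1 else 0 :=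
    funext fun _ => Pi.single_apply ..
  have h_tfae := coeff_vanishing_tfae_dim_le_two_general hd1 hd2 hdim hCM hIJ hc
  simp only [AdmissibleFiltration.isParameterAdic_pair_iff, h_single, Fin.sum_univ_two] at h_tfae
  exact ⟨h_tfae.out 0 1, h_tfae.out 1 2⟩
end

section
/- Let (R,m) be a Cohen–Macaulay local ring of dimension one with infinite residue field, I_1,…,I_s m-primary ideals, F = {F(n)}_{n∈ℤ^s} an I-admissible filtration of ideals in R, and A = {a_i∈I_i : i=1,…,s} a complete reduction of F. Then P(F) ⊆ ℕ^s and P(F) = R_A(F), i.e. the set of postulation vectors of F equals the set of reduction vectors of F with respect to A. In particular, the set R_A(F) is independent of the choice of complete reduction A of F. -/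
/-! Common definitions for multigraded filtrations of ideals
(following Sarkar–Verma, "Postulation and reduction vectors of
multigraded filtrations of ideals"). -/

open Finset IsLocalRing

section PostulationReduction

variable {R : Type*} [CommRing R] {s d : ℕ} {I : Fin s → Ideal R}

/-- The set `P(F)` of postulation vectors of `F` (w.r.t. the Hilbert coefficient data
`c` of its Hilbert polynomial): those `n ∈ ℤˢ` with `H_F(m) = P_F(m)` for all `m ≥ n`. -/
noncomputable def postSet (F : AdmissibleFiltration R s I) (d : ℕ)
    (c : (Fin s → ℕ) → ℤ) : Set (Fin s → ℤ) :=
  {n | ∀ m : Fin s → ℤ, n ≤ m → hilbFn F m = hilbPoly s d c m}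

/-- The set `R_A(F)` of reduction vectors of `F` with respect to a complete reduction
datum `x`: those `r ∈ ℕˢ` with `J·F(n) = F(n+e)` for all `n ≥ r`. -/
def redSet (F : AdmissibleFiltration R s I) (x : Fin s → Fin d → R) :
    Set (Fin s → ℤ) :=
  {r | 0 ≤ r ∧ ∀ n : Fin s → ℤ, r ≤ n → crIdeal x * F.F n = F.F (n + evec s)}

/-- The complete reduction number `r_A(F)`: the least `k ∈ ℕ` such that
`J·F(n) = F(n+e)` for all `n ≥ ke`. -/
noncomputable def crNumber (F : AdmissibleFiltration R s I) (x : Fin s → Fin d → R) : ℕ :=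
  sInf {k : ℕ | ∀ n : Fin s → ℤ, (∀ i, (k : ℤ) ≤ n i) →
    crIdeal x * F.F n = F.F (n + evec s)}

end PostulationReduction

/-!
Let `a` be a nonzerodivisor with `λ(R/(a)) < ∞`. Since `λ(R/aF(n)) = λ(R/F(n)) + λ(R/(a))`, for
`a ∈ F(m)` the equality `aF(n) = F(n+m)` holds exactly when `H(n+m) - H(n) = λ(R/(a))`.

Take `m = e` and `a = a₁⋯a_s`, so `J = (a)`; some power of the maximal ideal lies in `J`, so `a` is
a nonzerodivisor because the maximal ideal contains one. The polynomial `P` is affine and agrees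
with `H` far out, where `aF(n) = F(n+e)`, so `P(n+e) - P(n) = λ(R/(a))` for every `n`. Hence
`aF(n) = F(n+e)` says that `H - P` takes the same value at `n` and at `n+e`; as `H - P` vanishes
far out, this holds for all `n ≥ r` exactly when `H = P` beyond `r`.

Cancelling `∏_{j ≠ i} a_j` from `aF(n) = F(n+e)` gives `a_i F(n) = F(n+e_i)` far out, so likewise
`P(n+e_i) - P(n) = λ(R/(a_i)) > 0` for every `n`. But `H(n+e_i) = H(n)` whenever `n_i < 0`, so a
postulation vector has no negative entry.
-/

open Filter nonZeroDivisors

section Length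

variable {R : Type*} [CommRing R]

lemma lenI_eq_toNat_length (M : Type*) [AddCommGroup M] [Module R M] :
    lenI R M = (Module.length R M).toNat := by
  rw [lenI, ← Module.coe_length]
  rfl

lemma length_quotient_span_singleton_mul {a : R} (ha : a ∈ R⁰) (K : Ideal R) :
    Module.length R (R ⧸ Ideal.span {a} * K) =
      Module.length R (R ⧸ K) + Module.length R (R ⧸ Ideal.span {a}) := by
  rw [← smul_eq_mul, Submodule.ideal_span_singleton_smul]
  exact Module.length_eq_add_of_exact _ _ (Ideal.mulQuot_injective K ha)
    (Ideal.quotOfMul_surjective K) (Ideal.exact_mulQuot_quotOfMul K)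

variable [IsLocalRing R] [IsNoetherianRing R]

lemma length_quotient_ne_top_of_maximalIdeal_le_radical {K : Ideal R}
    (hK : maximalIdeal R ≤ K.radical) : Module.length R (R ⧸ K) ≠ ⊤ := by
  have : Ring.KrullDimLE 0 (R ⧸ K) := by
    rw [Ideal.krullDimLE_zero_quotient_iff_forall_minimalPrimes_isMaximal]
    intro p hp
    have : p.IsPrime := hp.1.1
    have hle : maximalIdeal R ≤ p := hK.trans (this.radical_le_iff.mpr hp.1.2)
    exact (maximalIdeal.isMaximal R).eq_of_le this.ne_top hle ▸ maximalIdeal.isMaximal R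
  have : IsArtinianRing (R ⧸ K) := IsNoetherianRing.isArtinianRing_of_krullDimLE_zero
  rw [Module.length_eq_of_surjective (S := R) (R := R ⧸ K) Ideal.Quotient.mk_surjective]
  exact Module.length_ne_top

lemma lenI_quotient_eq_iff {K L : Ideal R} (hK : maximalIdeal R ≤ K.radical) (hKL : K ≤ L) :
    lenI R (R ⧸ L) = lenI R (R ⧸ K) ↔ K = L := by
  refine ⟨fun h ↦ hKL.eq_of_not_lt fun hlt ↦ ?_, fun h ↦ h ▸ rfl⟩
  have hfinK := length_quotient_ne_top_of_maximalIdeal_le_radical hK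
  have hfinL := length_quotient_ne_top_of_maximalIdeal_le_radical
    (hK.trans (Ideal.radical_mono hKL))
  rw [lenI_eq_toNat_length, lenI_eq_toNat_length, Nat.cast_inj, ← ENat.natCast_inj,
    ENat.natCast_toNat hfinL, ENat.natCast_toNat hfinK] at h
  simp only [Module.length_quotient] at h hfinL
  exact (Order.coheight_strictAnti hlt hfinL.lt_top).ne h

lemma lenI_quotient_pos {K : Ideal R} (hK : maximalIdeal R ≤ K.radical) (hne : K ≠ ⊤) :
    0 < lenI R (R ⧸ K) := by
  have : Nontrivial (R ⧸ K) := Ideal.Quotient.nontrivial_iff.mpr hne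
  have hfin := length_quotient_ne_top_of_maximalIdeal_le_radical hK
  rw [lenI_eq_toNat_length, Nat.cast_pos]
  exact ENat.toNat_pos Module.length_pos.ne' hfin

lemma lenI_quotient_eq_add_iff {a : R} (ha : a ∈ R⁰)
    (hrad : maximalIdeal R ≤ (Ideal.span {a}).radical) {K L : Ideal R}
    (hK : maximalIdeal R ≤ K.radical) (hKL : Ideal.span {a} * K ≤ L) :
    lenI R (R ⧸ L) = lenI R (R ⧸ K) + lenI R (R ⧸ Ideal.span {a}) ↔ Ideal.span {a} * K = L := by
  have hadd : lenI R (R ⧸ Ideal.span {a} * K) =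
      lenI R (R ⧸ K) + lenI R (R ⧸ Ideal.span {a}) := by
    simp only [lenI_eq_toNat_length]
    rw [length_quotient_span_singleton_mul ha,
      ENat.toNat_add (length_quotient_ne_top_of_maximalIdeal_le_radical hK)
        (length_quotient_ne_top_of_maximalIdeal_le_radical hrad), Nat.cast_add]
  have hrad_mul : maximalIdeal R ≤ (Ideal.span {a} * K).radical := by
    rw [Ideal.radical_mul]
    exact le_inf hrad hK
  rw [← hadd, lenI_quotient_eq_iff hrad_mul hKL]

end Length

section NonZeroDivisors

variable {R : Type*} [CommRing R]

lemma mem_nonZeroDivisors_of_mem_radical_span_singleton {y z : R} (hz : z ∈ R⁰)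
    (h : z ∈ (Ideal.span {y}).radical) : y ∈ R⁰ := by
  obtain ⟨k, hk⟩ := h
  obtain ⟨b, hb⟩ := Ideal.mem_span_singleton'.mp hk
  exact (mul_mem_nonZeroDivisors.mp (hb ▸ pow_mem hz k)).2

lemma exists_mem_nonZeroDivisors_of_isCMLocal [IsLocalRing R] (hdim : ringKrullDim R ≠ 0)
    (hCM : IsCMLocal R) : ∃ z ∈ maximalIdeal R, z ∈ R⁰ := by
  obtain ⟨_ | ⟨z, rs⟩, hm, hreg, hlen⟩ := hCM
  · exact absurd hlen.symm (by simpa using hdim)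
  · have hz : IsSMulRegular R z := ((RingTheory.Sequence.isRegular_cons_iff R z rs).mp hreg).1
    exact ⟨z, hm z (by simp), mem_nonZeroDivisors_iff.mpr
      ⟨fun t ht ↦ hz (by simpa using ht), fun t ht ↦ hz (by simpa [mul_comm] using ht)⟩⟩

lemma span_singleton_mul_eq_of_span_mul_mul_eq {a b : R} (hb : b ∈ R⁰) {K L M : Ideal R}
    (hKL : Ideal.span {a} * K ≤ L) (hLM : Ideal.span {b} * L ≤ M)
    (h : Ideal.span {a * b} * K = M) : Ideal.span {a} * K = L := by
  refine hKL.antisymm (Ideal.le_span_singleton_mul_iff.mpr fun t ht ↦ ?_)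
  have hbt : b * t ∈ Ideal.span {a * b} * K := h ▸ Ideal.span_singleton_mul_le_iff.mp hLM t ht
  obtain ⟨u, hu, hut⟩ := Ideal.mem_span_singleton_mul.mp hbt
  exact ⟨u, hu, (mul_cancel_left_mem_nonZeroDivisors hb).mp (by rw [← hut]; ring)⟩

end NonZeroDivisors

section Multidegrees

lemma evec_eq_sum_single (s : ℕ) : evec s = ∑ i, Pi.single i 1 :=
  (Finset.univ_sum_single (evec s)).symm

lemma evec_nonneg (s : ℕ) : 0 ≤ evec s := fun _ ↦ zero_le_one

lemma eventually_atTop_of_forall_natCast_le {ι : Type*} {p : (ι → ℤ) → Prop}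
    (h : ∃ N : ℕ, ∀ n : ι → ℤ, (∀ i, (N : ℤ) ≤ n i) → p n) : ∀ᶠ n in atTop, p n :=
  let ⟨N, hN⟩ := h
  (eventually_ge_atTop fun _ ↦ (N : ℤ)).mono hN

lemma tendsto_add_nsmul_evec_atTop {s : ℕ} (m : Fin s → ℤ) :
    Tendsto (fun k : ℕ ↦ m + k • evec s) atTop atTop := by
  refine tendsto_atTop.mpr fun b ↦ ?_
  simp only [Pi.le_def, eventually_all]
  intro i
  filter_upwards [eventually_ge_atTop (b i - m i).toNat] with k hk
  have hentry : (m + k • evec s) i = m i + k := by simp [evec]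
  lia

lemma eq_of_forall_add_evec_eq_of_eventually_eq {s : ℕ} {α : Type*} {f : (Fin s → ℤ) → α}
    {r m : Fin s → ℤ} {v : α} (hf : ∀ n, r ≤ n → f (n + evec s) = f n)
    (hv : ∀ᶠ n in atTop, f n = v) (hm : r ≤ m) : f m = v := by
  have hconst (k : ℕ) : f (m + k • evec s) = f m := by
    induction k with
    | zero => simp
    | succ k ih =>
      have hle : r ≤ m + k • evec s :=
        hm.trans (le_add_of_nonneg_right (nsmul_nonneg (evec_nonneg s) k))
      rw [succ_nsmul, ← add_assoc, hf _ hle, ih]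
  obtain ⟨k, hk⟩ := ((tendsto_add_nsmul_evec_atTop m).eventually hv).exists
  rw [← hconst k, hk]

end Multidegrees

section HilbertPolynomial

lemma filter_sum_le_one_eq (s : ℕ) :
    Finset.univ.filter (fun α : Fin s → Fin 2 ↦ ∑ i, (α i : ℕ) ≤ 1) =
      insert 0 (Finset.univ.image fun i ↦ Pi.single i 1) := by
  ext α
  simp only [Finset.mem_filter, Finset.mem_univ, true_and, Finset.mem_insert, Finset.mem_image]
  constructor
  · refine fun hα ↦ or_iff_not_imp_left.mpr fun hne ↦ ?_
    obtain ⟨j, hj⟩ := Function.ne_iff.mp hne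
    refine ⟨j, funext fun i ↦ ?_⟩
    rcases eq_or_ne i j with rfl | hij
    · simpa using (Fin.eq_one_of_ne_zero _ hj).symm
    · have hle := Finset.add_le_sum (f := fun i ↦ (α i : ℕ)) (fun _ _ ↦ Nat.zero_le _)
        (Finset.mem_univ i) (Finset.mem_univ j) hij
      have hj' : (α j : ℕ) ≠ 0 := fun h ↦ hj (Fin.ext h)
      have hi : (α i : ℕ) = 0 := by lia
      simpa [hij] using Fin.ext hi.symm
  · rintro (rfl | ⟨j, rfl⟩)
    · simp
    · simp [Pi.single_apply, apply_ite]

lemma hilbPoly_one_eq {s : ℕ} (c : (Fin s → ℕ) → ℤ) (n : Fin s → ℤ) :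
    hilbPoly s 1 c n = -c 0 + ∑ i, c (Pi.single i 1) * n i := by
  have hinj : Function.Injective fun i : Fin s ↦ (Pi.single i 1 : Fin s → Fin 2) :=
    fun i j h ↦ by
      by_contra hij
      simpa [hij] using congrFun h i
  have hval (i : Fin s) : (fun j ↦ ((Pi.single i 1 : Fin s → Fin 2) j : ℕ)) = Pi.single i 1 := by
    ext j
    rcases eq_or_ne j i with rfl | hij <;> simp [*]
  have hprod (i : Fin s) : ∏ j, Ring.choose
      (n j + ((Pi.single i 1 : Fin s → ℕ) j : ℤ) - 1) ((Pi.single i 1 : Fin s → ℕ) j) = n i := by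
    rw [Finset.prod_eq_single i (fun j _ hj ↦ by simp [hj]) (by simp)]
    simp
  rw [hilbPoly, filter_sum_le_one_eq, Finset.sum_insert (by simp [funext_iff, Pi.single_apply]),
    Finset.sum_image hinj.injOn]
  congr 1
  · simp [Pi.zero_def]
  · refine Finset.sum_congr rfl fun i _ ↦ ?_
    have hval_apply (j : Fin s) := congrFun (hval i) j
    simp [hval_apply, hprod]

lemma hilbPoly_one_add {s : ℕ} (c : (Fin s → ℕ) → ℤ) (n m : Fin s → ℤ) :
    hilbPoly s 1 c (n + m) = hilbPoly s 1 c n + ∑ i, c (Pi.single i 1) * m i := by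
  simp only [hilbPoly_one_eq, Pi.add_apply, mul_add, Finset.sum_add_distrib, add_assoc]

end HilbertPolynomial

lemma prodPow_single_one {R : Type*} [CommRing R] {s : ℕ} (I : Fin s → Ideal R) (i : Fin s) :
    prodPow I (Pi.single i 1) = I i := by
  rw [prodPow, Finset.prod_eq_single i (fun j _ hj ↦ by simp [hj]) (by simp)]
  simp

namespace AdmissibleFiltration

variable {R : Type*} [CommRing R] {s : ℕ} {I : Fin s → Ideal R} (F : AdmissibleFiltration R s I)

lemma le_radical {K : Ideal R} (hI : ∀ i, K ≤ (I i).radical) (n : Fin s → ℤ) :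
    K ≤ (F.F n).radical := by
  refine le_trans ?_ (Ideal.radical_mono (F.prodPow_le n))
  intro t ht
  choose k hk using fun i ↦ hI i ht
  refine ⟨∑ i, k i * (n i).toNat, ?_⟩
  rw [← Finset.prod_pow_eq_pow_sum]
  exact Ideal.prod_mem_prod fun i _ ↦ pow_mul t (k i) _ ▸ Ideal.pow_mem_pow (hk i) _

lemma mem_single_one {i : Fin s} {t : R} (ht : t ∈ I i) : t ∈ F.F (Pi.single i 1) :=
  F.prodPow_le _ ((prodPow_single_one I i).symm ▸ ht)

lemma prod_mem {a : Fin s → R} (ha : ∀ i, a i ∈ I i) (S : Finset (Fin s)) :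
    ∏ i ∈ S, a i ∈ F.F (∑ i ∈ S, Pi.single i 1) := by
  induction S using Finset.induction_on with
  | empty =>
    have hzero : prodPow I 0 = ⊤ := by simp [prodPow, Ideal.one_eq_top]
    exact F.prodPow_le 0 (hzero ▸ Submodule.mem_top)
  | insert i S hi ih =>
    rw [Finset.prod_insert hi, Finset.sum_insert hi]
    exact F.mul_le _ _ (Ideal.mul_mem_mul (F.mem_single_one (ha i)) ih)

lemma span_singleton_mul_le {a : R} {m : Fin s → ℤ} (ha : a ∈ F.F m) (n : Fin s → ℤ) :
    Ideal.span {a} * F.F n ≤ F.F (n + m) := by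
  rw [add_comm]
  exact (Ideal.mul_mono_left ((Ideal.span_singleton_le_iff_mem _).mpr ha)).trans (F.mul_le m n)

lemma apply_add_single_of_neg {n : Fin s → ℤ} {i : Fin s} (hi : n i < 0) :
    F.F (n + Pi.single i 1) = F.F n := by
  have hplus : vplus (n + Pi.single i 1) = vplus n := by
    ext j
    rcases eq_or_ne j i with rfl | hj
    · simp only [vplus, Pi.add_apply, Pi.single_eq_same]
      lia
    · simp [vplus, hj]
  rw [F.plus_eq, hplus, ← F.plus_eq]

variable [IsLocalRing R] [IsNoetherianRing R] (hI : ∀ i, IsMPrimary R (I i))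
include hI

variable {F} in
lemma hilbFn_add_eq_iff {a : R} {m : Fin s → ℤ} (ham : a ∈ F.F m) (ha : a ∈ R⁰)
    (hrad : maximalIdeal R ≤ (Ideal.span {a}).radical) (n : Fin s → ℤ) :
    hilbFn F (n + m) = hilbFn F n + lenI R (R ⧸ Ideal.span {a}) ↔
      Ideal.span {a} * F.F n = F.F (n + m) :=
  lenI_quotient_eq_add_iff ha hrad (F.le_radical (fun i ↦ (hI i).2) n)
    (F.span_singleton_mul_le ham n)

variable {F} in
lemma hilbPoly_add_eq {c : (Fin s → ℕ) → ℤ} (hc : IsHilbCoeffs F 1 c) {a : R} {m : Fin s → ℤ}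
    (ham : a ∈ F.F m) (ha : a ∈ R⁰) (hrad : maximalIdeal R ≤ (Ideal.span {a}).radical)
    (hmul : ∀ᶠ n in atTop, Ideal.span {a} * F.F n = F.F (n + m)) (n : Fin s → ℤ) :
    hilbPoly s 1 c (n + m) = hilbPoly s 1 c n + lenI R (R ⧸ Ideal.span {a}) := by
  have hP := eventually_atTop_of_forall_natCast_le hc
  have hPm : ∀ᶠ n in atTop, hilbPoly s 1 c (n + m) = hilbFn F (n + m) :=
    (tendsto_atTop_add_const_right atTop m tendsto_id).eventually hP
  obtain ⟨q, hq, hqm, hmulq⟩ := (hP.and (hPm.and hmul)).exists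
  have hstep := (hilbFn_add_eq_iff hI ham ha hrad q).mpr hmulq
  rw [← hq, ← hqm, hilbPoly_one_add] at hstep
  rw [hilbPoly_one_add, add_left_cancel hstep]

end AdmissibleFiltration

lemma crIdeal_eq_span_singleton {R : Type*} [CommRing R] {s : ℕ} (x : Fin s → Fin 1 → R) :
    crIdeal x = Ideal.span {∏ i, x i 0} := by
  rw [crIdeal, Set.range_unique, Fin.default_eq_zero]

namespace IsCompleteReduction

section

variable {R : Type*} [CommRing R] {s d : ℕ} {I : Fin s → Ideal R} {F : AdmissibleFiltration R s I}

lemma eventually_mul_eq {x : Fin s → Fin d → R} (hx : IsCompleteReduction F x) :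
    ∀ᶠ n in atTop, crIdeal x * F.F n = F.F (n + evec s) :=
  eventually_atTop_of_forall_natCast_le hx.2

lemma le_radical_crIdeal {x : Fin s → Fin d → R} (hx : IsCompleteReduction F x) {K : Ideal R}
    (hI : ∀ i, K ≤ (I i).radical) : K ≤ (crIdeal x).radical := by
  obtain ⟨n, hn⟩ := hx.eventually_mul_eq.exists
  exact (F.le_radical hI (n + evec s)).trans (Ideal.radical_mono (hn ▸ Ideal.mul_le_left))

variable {x : Fin s → Fin 1 → R} (hx : IsCompleteReduction F x)
include hx

lemma prod_mem : ∏ i, x i 0 ∈ F.F (evec s) :=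
  evec_eq_sum_single s ▸ F.prod_mem (fun i ↦ hx.1 i 0) Finset.univ

lemma eventually_span_singleton_mul_eq (hreg : ∏ i, x i 0 ∈ R⁰) (i : Fin s) :
    ∀ᶠ n in atTop, Ideal.span {x i 0} * F.F n = F.F (n + Pi.single i 1) := by
  have hprod : ∏ j, x j 0 = x i 0 * ∏ j ∈ Finset.univ.erase i, x j 0 :=
    (Finset.mul_prod_erase Finset.univ (fun j ↦ x j 0) (Finset.mem_univ i)).symm
  have hdeg : evec s = Pi.single i 1 + ∑ j ∈ Finset.univ.erase i, (Pi.single j 1 : Fin s → ℤ) :=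
    (evec_eq_sum_single s).trans (Finset.add_sum_erase _ _ (Finset.mem_univ i)).symm
  rw [hprod, mul_mem_nonZeroDivisors] at hreg
  have hb := F.prod_mem (fun j ↦ hx.1 j 0) (Finset.univ.erase i)
  filter_upwards [hx.eventually_mul_eq] with n hn
  rw [crIdeal_eq_span_singleton, hprod, hdeg, ← add_assoc] at hn
  exact span_singleton_mul_eq_of_span_mul_mul_eq hreg.2
    (F.span_singleton_mul_le (F.mem_single_one (hx.1 i 0)) n) (F.span_singleton_mul_le hb _) hn

end

variable {R : Type*} [CommRing R] [IsLocalRing R] {s : ℕ} {I : Fin s → Ideal R}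
  {F : AdmissibleFiltration R s I} {x : Fin s → Fin 1 → R}
  (hdepth : ∃ z ∈ maximalIdeal R, z ∈ R⁰) (hI : ∀ i, IsMPrimary R (I i))
  (hx : IsCompleteReduction F x)
include hI hx

lemma maximalIdeal_le_radical_span_prod :
    maximalIdeal R ≤ (Ideal.span {∏ i, x i 0}).radical :=
  crIdeal_eq_span_singleton x ▸ hx.le_radical_crIdeal fun i ↦ (hI i).2

include hdepth

lemma prod_mem_nonZeroDivisors : ∏ i, x i 0 ∈ R⁰ := by
  obtain ⟨z, hzm, hz⟩ := hdepth
  exact mem_nonZeroDivisors_of_mem_radical_span_singleton hz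
    (hx.maximalIdeal_le_radical_span_prod hI hzm)

variable [IsNoetherianRing R]

lemma hilbFn_add_evec_eq_iff (n : Fin s → ℤ) :
    hilbFn F (n + evec s) = hilbFn F n + lenI R (R ⧸ crIdeal x) ↔
      crIdeal x * F.F n = F.F (n + evec s) := by
  rw [crIdeal_eq_span_singleton]
  exact AdmissibleFiltration.hilbFn_add_eq_iff hI hx.prod_mem
    (hx.prod_mem_nonZeroDivisors hdepth hI) (hx.maximalIdeal_le_radical_span_prod hI) n

variable {c : (Fin s → ℕ) → ℤ} (hc : IsHilbCoeffs F 1 c)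
include hc

lemma hilbPoly_add_evec (n : Fin s → ℤ) :
    hilbPoly s 1 c (n + evec s) = hilbPoly s 1 c n + lenI R (R ⧸ crIdeal x) := by
  have hmul := hx.eventually_mul_eq
  rw [crIdeal_eq_span_singleton] at hmul ⊢
  exact AdmissibleFiltration.hilbPoly_add_eq hI hc hx.prod_mem
    (hx.prod_mem_nonZeroDivisors hdepth hI) (hx.maximalIdeal_le_radical_span_prod hI) hmul n

lemma hilbPoly_lt_hilbPoly_add_single (n : Fin s → ℤ) (i : Fin s) :
    hilbPoly s 1 c n < hilbPoly s 1 c (n + Pi.single i 1) := by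
  obtain ⟨z, hzm, hz⟩ := hdepth
  have hdvd : x i 0 ∣ ∏ j, x j 0 := Finset.dvd_prod_of_mem (x · 0) (Finset.mem_univ i)
  have hrad : maximalIdeal R ≤ (Ideal.span {x i 0}).radical :=
    (hx.maximalIdeal_le_radical_span_prod hI).trans
      (Ideal.radical_mono (Ideal.span_singleton_le_span_singleton.mpr hdvd))
  have hne : Ideal.span {x i 0} ≠ ⊤ :=
    ne_top_of_le_ne_top (hI i).1 ((Ideal.span_singleton_le_iff_mem _).mpr (hx.1 i 0))
  rw [AdmissibleFiltration.hilbPoly_add_eq hI hc (F.mem_single_one (hx.1 i 0))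
    (mem_nonZeroDivisors_of_mem_radical_span_singleton hz (hrad hzm)) hrad
    (hx.eventually_span_singleton_mul_eq (hx.prod_mem_nonZeroDivisors ⟨z, hzm, hz⟩ hI) i)]
  exact lt_add_of_pos_right _ (lenI_quotient_pos hrad hne)

theorem postSet_subset_nonneg : postSet F 1 c ⊆ {n | 0 ≤ n} := by
  refine fun n hn ↦ not_not.mp fun hneg ↦ ?_
  obtain ⟨i, hi⟩ := not_forall.mp hneg
  have hle : n ≤ n + Pi.single i 1 := le_add_of_nonneg_right (Pi.single_nonneg.mpr zero_le_one)
  have hH : hilbFn F (n + Pi.single i 1) = hilbFn F n := by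
    rw [hilbFn, F.apply_add_single_of_neg (not_le.mp hi), hilbFn]
  rw [hn n le_rfl, hn _ hle] at hH
  exact (hx.hilbPoly_lt_hilbPoly_add_single hdepth hI hc n i).ne' hH

theorem postSet_eq_redSet : postSet F 1 c = redSet F x := by
  have hiff := hx.hilbFn_add_evec_eq_iff hdepth hI
  have hstep := hx.hilbPoly_add_evec hdepth hI hc
  refine Set.Subset.antisymm (fun r hr ↦ ⟨hx.postSet_subset_nonneg hdepth hI hc hr, fun n hn ↦ ?_⟩)
    fun r hr m hm ↦ ?_
  · rw [← hiff, hr n hn, hr _ (hn.trans (le_add_of_nonneg_right (evec_nonneg s))), hstep]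
  · have hdiff (n : Fin s → ℤ) (hn : r ≤ n) :
        hilbFn F (n + evec s) - hilbPoly s 1 c (n + evec s) = hilbFn F n - hilbPoly s 1 c n := by
      rw [(hiff n).mpr (hr.2 n hn), hstep, add_sub_add_right_eq_sub]
    have hzero : ∀ᶠ n in atTop, hilbFn F n - hilbPoly s 1 c n = 0 :=
      (eventually_atTop_of_forall_natCast_le hc).mono fun n hn ↦ sub_eq_zero.mpr hn.symm
    exact sub_eq_zero.mp (eq_of_forall_add_evec_eq_of_eventually_eq hdiff hzero hm)

end IsCompleteReduction

theorem postulation_eq_reduction_dim_one_general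
    {R : Type*} [CommRing R] [IsLocalRing R] [IsNoetherianRing R]
    (s : ℕ) (hdepth : ∃ z ∈ maximalIdeal R, z ∈ R⁰)
    (I : Fin s → Ideal R) (hI : ∀ i, IsMPrimary R (I i))
    (F : AdmissibleFiltration R s I)
    (c : (Fin s → ℕ) → ℤ) (hc : IsHilbCoeffs F 1 c)
    (x : Fin s → Fin 1 → R) (hx : IsCompleteReduction F x) :
    postSet F 1 c ⊆ {n | 0 ≤ n}
    ∧ postSet F 1 c = redSet F x
    ∧ (∀ x' : Fin s → Fin 1 → R, IsCompleteReduction F x' →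
        redSet F x = redSet F x') :=
  have hP {x' : Fin s → Fin 1 → R} (hx' : IsCompleteReduction F x') :
      postSet F 1 c = redSet F x' := hx'.postSet_eq_redSet hdepth hI hc
  ⟨hx.postSet_subset_nonneg hdepth hI hc, hP hx, fun _ hx' ↦ (hP hx).symm.trans (hP hx')⟩

/-- STATEMENT 15: Let `(R,m)` be Cohen–Macaulay local of dimension one with infinite
residue field, `I₁,…,I_s` `m`-primary, `F` an `I`-admissible filtration, and
`A = {a_i ∈ I_i}` a complete reduction of `F` (`d = 1`, so `A` is a single column).
Then `P(F) ⊆ ℕˢ` and `P(F) = R_A(F)`; in particular `R_A(F)` is independent of the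
choice of complete reduction `A`. -/
theorem postulation_eq_reduction_dim_one
    (R : Type*) [CommRing R] [IsLocalRing R] [IsNoetherianRing R]
    [Infinite (IsLocalRing.ResidueField R)]
    (s : ℕ) (hdim : ringKrullDim R = 1) (hCM : IsCMLocal R)
    (I : Fin s → Ideal R) (hI : ∀ i, IsMPrimary R (I i))
    (F : AdmissibleFiltration R s I)
    (c : (Fin s → ℕ) → ℤ) (hc : IsHilbCoeffs F 1 c)
    (x : Fin s → Fin 1 → R) (hx : IsCompleteReduction F x) :
    postSet F 1 c ⊆ {n | 0 ≤ n}
    ∧ postSet F 1 c = redSet F x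
    ∧ (∀ x' : Fin s → Fin 1 → R, IsCompleteReduction F x' →
        redSet F x = redSet F x') :=
  postulation_eq_reduction_dim_one_general s
    (exists_mem_nonZeroDivisors_of_isCMLocal (by simp [hdim]) hCM) I hI F c hc x hx
end
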